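/- Let p be an arbitrary but fixed prime. Then the series Σ_{n ≥ 2, p(n) = p} μ(n) ω(n) / n, taken over integers n ≥ 2 whose smallest prime factor equals p, converges and equals 0; that is, lim_{x → ∞} Σ_{2 ≤ n ≤ x, p(n) = p} μ(n) ω(n)/n = 0. -/

import Mathlib

open Finset ArithmeticFunction Filter

/-- fractional part cut to `(1, ∞)` -/
noncomputable def mzFr : ℝ → ℂ := fun t => if 1 < t then ((Int.fract t : ℝ) : ℂ) else 0

noncomputable def mzK (w : ℂ) : ℂ := mellin mzFr w

lemma mzFr_meas : Measurable mzFr := by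
  unfold mzFr
  refine Measurable.ite measurableSet_Ioi ?_ measurable_const
  exact Complex.measurable_ofReal.comp measurable_fract

lemma mzFr_norm (t : ℝ) : ‖mzFr t‖ ≤ 1 := by
  unfold mzFr
  split_ifs
  · rw [Complex.norm_real, Real.norm_eq_abs, abs_of_nonneg (Int.fract_nonneg t)]
    exact (Int.fract_lt_one t).le
  · simp

lemma mzFr_locInt : MeasureTheory.LocallyIntegrableOn mzFr (Set.Ioi 0) := by
  apply MeasureTheory.LocallyIntegrable.locallyIntegrableOn
  refine (MeasureTheory.locallyIntegrable_const (1:ℝ)).mono mzFr_meas.aestronglyMeasurable ?_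
  filter_upwards with t
  simpa using mzFr_norm t

lemma mzK_deriv {w : ℂ} (hw : w.re < 0) :
    HasDerivAt mzK (mellin (fun t => Real.log t • mzFr t) w) w := by
  refine (mellin_hasDerivAt_of_isBigO_rpow (a := 0) (b := w.re - 1) mzFr_locInt ?_ hw ?_
    (by linarith)).2
  · refine Asymptotics.IsBigO.of_bound 1 ?_
    filter_upwards with t
    simpa using mzFr_norm t
  · refine Asymptotics.IsBigO.of_bound 1 ?_
    have : Set.Ioo (0:ℝ) 1 ∈ nhdsWithin (0:ℝ) (Set.Ioi 0) := Ioo_mem_nhdsGT one_pos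
    filter_upwards [this] with t ht
    have : mzFr t = 0 := by unfold mzFr; rw [if_neg]; exact not_lt.2 ht.2.le
    rw [this]; simp

lemma mz_aux_bound {w : ℂ} (hw : w.re ≤ -1) (g : ℝ → ℂ) (hg0 : ∀ t ≤ 1, g t = 0)
    (hg : ∀ t, 1 < t → ‖g t‖ ≤ 2 * t ^ (1/2 : ℝ)) : ‖mellin g w‖ ≤ 4 := by
  unfold mellin
  have h1 : ∀ t ∈ Set.Ioi (0:ℝ), ‖((t:ℂ) ^ (w - 1)) • g t‖ ≤
      (Set.Ioi (1:ℝ)).indicator (fun t => 2 * t ^ (-(3/2) : ℝ)) t := by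
    intro t ht
    by_cases h : 1 < t
    · rw [Set.indicator_of_mem (by exact h), norm_smul,
        Complex.norm_cpow_eq_rpow_re_of_pos ht]
      calc t ^ (w-1).re * ‖g t‖ ≤ t ^ (-2:ℝ) * (2 * t ^ (1/2:ℝ)) := by
            gcongr
            · exact h.le
            · simp; linarith
            · exact hg t h
        _ = 2 * (t ^ (-2:ℝ) * t ^ (1/2:ℝ)) := by ring
        _ = _ := by rw [← Real.rpow_add ht]; norm_num
    · rw [hg0 t (not_lt.1 h)]
      rw [Set.indicator_of_notMem (by exact h)]; simp
  have hI : MeasureTheory.IntegrableOn (fun t:ℝ => 2 * t ^ (-(3/2) : ℝ)) (Set.Ioi 1) :=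
    (integrableOn_Ioi_rpow_of_lt (by norm_num) one_pos).const_mul 2
  refine (MeasureTheory.norm_integral_le_of_norm_le ?_ ((MeasureTheory.ae_restrict_iff'
    measurableSet_Ioi).2 (Filter.Eventually.of_forall h1))).trans ?_
  · exact ((MeasureTheory.integrable_indicator_iff measurableSet_Ioi).2 hI).integrableOn
  · rw [MeasureTheory.setIntegral_indicator measurableSet_Ioi,
      Set.inter_eq_right.2 (Set.Ioi_subset_Ioi zero_le_one), MeasureTheory.integral_const_mul,
      integral_Ioi_rpow_of_lt (by norm_num) one_pos]
    norm_num

lemma mzK_bound {w : ℂ} (hw : w.re ≤ -1) : ‖mzK w‖ ≤ 4 := by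
  refine mz_aux_bound hw _ ?_ ?_
  · intro t ht; unfold mzFr; rw [if_neg (not_lt.2 ht)]
  · intro t ht
    have := Real.one_le_rpow ht.le (show (0:ℝ) ≤ 1/2 by norm_num)
    linarith [mzFr_norm t]

lemma mzK'_bound {w : ℂ} (hw : w.re ≤ -1) :
    ‖mellin (fun t => Real.log t • mzFr t) w‖ ≤ 4 := by
  refine mz_aux_bound hw _ ?_ ?_
  · intro t ht; unfold mzFr; rw [if_neg (not_lt.2 ht), smul_zero]
  · intro t ht
    rw [norm_smul, Real.norm_eq_abs, abs_of_nonneg (Real.log_nonneg ht.le)]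
    have h := Real.log_le_rpow_div (zero_le_one.trans ht.le) (show (0:ℝ) < 1/2 by norm_num)
    calc Real.log t * ‖mzFr t‖ ≤ Real.log t * 1 := by
          gcongr
          · exact Real.log_nonneg ht.le
          · exact mzFr_norm t
      _ ≤ _ := by rw [mul_one]; linarith

/-- `Z(s) = s ζ(1+s)` -/
noncomputable def mzZ (s : ℂ) : ℂ := (1 + s) - s * (1 + s) * mzK (-(s + 1))

lemma mzZ_eq {s : ℂ} (hs : 0 < s.re) : mzZ s = s * riemannZeta (1 + s) := by
  have hs0 : s ≠ 0 := by rintro rfl; simp at hs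
  have h1 : 1 < (1 + s).re := by simp; linarith
  have h2 := LSeries_eq_mul_integral_of_nonneg (fun _ => 1) (r := 1) zero_le_one (s := 1 + s) h1
    (by
      refine Asymptotics.IsBigO.of_bound 1 ?_
      filter_upwards with n
      simp) (fun _ => zero_le_one)
  have h3 : LSeries (fun n => ((1:ℝ):ℂ)) (1 + s) = riemannZeta (1 + s) := by
    rw [← LSeries_one_eq_riemannZeta h1]; congr 1
  rw [h3] at h2
  have hK : mzK (-(s + 1)) = ∫ t in Set.Ioi (1:ℝ), (t:ℂ) ^ (-(s+2)) * (Int.fract t : ℝ) := by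
    unfold mzK mellin
    have : ∀ t : ℝ, ((t:ℂ) ^ (-(s+1) - 1)) • mzFr t =
      (Set.Ioi (1:ℝ)).indicator (fun t : ℝ => (t:ℂ) ^ (-(s+2)) * ((Int.fract t : ℝ):ℂ)) t := by
      intro t
      by_cases h : 1 < t
      · rw [Set.indicator_of_mem (by exact h)]
        simp only [mzFr, if_pos h, smul_eq_mul]
        congr 2; ring
      · rw [Set.indicator_of_notMem (by exact h)]
        simp [mzFr, if_neg h]
    simp_rw [this]
    rw [MeasureTheory.setIntegral_indicator measurableSet_Ioi,
      Set.inter_eq_right.2 (Set.Ioi_subset_Ioi zero_le_one)]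
  have hint1 : MeasureTheory.IntegrableOn (fun t : ℝ => (t:ℂ) ^ (-(s+1))) (Set.Ioi 1) :=
    integrableOn_Ioi_cpow_of_lt (by simp; linarith) one_pos
  have hint2 : MeasureTheory.IntegrableOn
      (fun t : ℝ => (t:ℂ) ^ (-(s+2)) * ((Int.fract t : ℝ):ℂ)) (Set.Ioi 1) := by
    have := integrableOn_Ioi_cpow_of_lt (a := -(s+2)) (by simp; linarith) one_pos
    refine MeasureTheory.Integrable.mul_bdd (c := 1) this
      (Complex.measurable_ofReal.comp measurable_fract).aestronglyMeasurable ?_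
    filter_upwards with t
    simp [abs_of_nonneg (Int.fract_nonneg t), (Int.fract_lt_one t).le]
  have h4 : ∫ t in Set.Ioi (1:ℝ), (∑ k ∈ Icc 1 ⌊t⌋₊, (((fun _ => (1:ℝ)) k : ℝ) : ℂ)) * (t:ℂ) ^ (-(1 + s + 1))
     = 1 / s - mzK (-(s+1)) := by
    rw [hK]
    have : 1 / s = ∫ t in Set.Ioi (1:ℝ), (t:ℂ) ^ (-(s+1)) := by
      rw [integral_Ioi_cpow_of_lt (by simp; linarith) one_pos]
      simp
    rw [this, ← MeasureTheory.integral_sub hint1 hint2]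
    refine MeasureTheory.setIntegral_congr_fun measurableSet_Ioi ?_
    intro t ht
    have ht : 1 < t := ht
    have ht0 : (t:ℂ) ≠ 0 := by
      have : t ≠ 0 := by linarith
      exact_mod_cast this
    have e1 : ((⌊t⌋₊ : ℝ)) = t - Int.fract t := by
      rw [natCast_floor_eq_intCast_floor (by linarith)]
      linarith [Int.floor_add_fract t]
    have e2 : ((⌊t⌋₊ : ℂ)) = t - (Int.fract t : ℝ) := by exact_mod_cast congrArg Complex.ofReal e1
    have e3 : (t:ℂ) ^ (-(s+1)) = t * (t:ℂ) ^ (-(s+2)) := by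
      rw [show -(s+1) = 1 + (-(s+2)) by ring, Complex.cpow_add _ _ ht0, Complex.cpow_one]
    simp only [Complex.ofReal_one, sum_const, Nat.card_Icc, add_tsub_cancel_right, nsmul_eq_mul,
      mul_one]
    rw [e3, e2, show -(1 + s + 1) = -(s+2) by ring]
    ring
  rw [h4] at h2
  rw [h2]
  unfold mzZ
  field_simp

lemma mzZ_near {s : ℂ} (hs : 0 ≤ s.re) : ‖mzZ s - (1 + s)‖ ≤ 4 * ‖s‖ * ‖1 + s‖ := by
  have : mzZ s - (1 + s) = - (s * (1 + s) * mzK (-(s+1))) := by unfold mzZ; ring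
  rw [this, norm_neg, norm_mul, norm_mul]
  have := mzK_bound (w := -(s+1)) (by simp; linarith)
  nlinarith [mul_nonneg (norm_nonneg s) (norm_nonneg (1+s))]

/-- the derivative of `mzZ` -/
noncomputable def mzZ' (s : ℂ) : ℂ := 1 - ((1 + 2 * s) * mzK (-(s+1)) +
  s * (1 + s) * (mellin (fun t => Real.log t • mzFr t) (-(s+1)) * (-1)))

lemma mzZ_deriv {s : ℂ} (hs : 0 ≤ s.re) : HasDerivAt mzZ (mzZ' s) s := by
  have h0 : HasDerivAt (fun s : ℂ => -(s+1)) (-1) s := ((hasDerivAt_id s).add_const 1).neg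
  have h1 : HasDerivAt (fun s : ℂ => mzK (-(s+1)))
      (mellin (fun t => Real.log t • mzFr t) (-(s+1)) * (-1)) s :=
    (mzK_deriv (w := -(s+1)) (by simp; linarith)).comp s h0
  have h2 : HasDerivAt (fun s : ℂ => 1 + s) 1 s := (hasDerivAt_id s).const_add 1
  have h3 : HasDerivAt (fun s : ℂ => s * (1 + s)) (1 + 2 * s) s := by
    have := (hasDerivAt_id s).mul h2
    convert! this using 1
    simp; ring
  exact h2.sub (h3.mul h1)

lemma mzZ'_bound {s : ℂ} (hs : 0 ≤ s.re) : ‖mzZ' s‖ ≤ 20 * (1 + ‖s‖) ^ 2 := by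
  unfold mzZ'
  have hK := mzK_bound (w := -(s+1)) (by simp; linarith)
  have hK' := mzK'_bound (w := -(s+1)) (by simp; linarith)
  set a := mzK (-(s+1))
  set b := mellin (fun t => Real.log t • mzFr t) (-(s+1))
  have n1 : ‖1 + s‖ ≤ 1 + ‖s‖ := (norm_add_le _ _).trans (by simp)
  have n2 : ‖1 + 2 * s‖ ≤ 1 + 2 * ‖s‖ := (norm_add_le _ _).trans (by simp)
  calc _ ≤ ‖(1:ℂ)‖ + (‖(1 + 2 * s) * a‖ + ‖s * (1 + s) * (b * (-1))‖) :=
        (norm_sub_le _ _).trans (by gcongr; exact norm_add_le _ _)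
    _ = 1 + (‖1 + 2 * s‖ * ‖a‖ + ‖s‖ * ‖1 + s‖ * ‖b‖) := by simp
    _ ≤ 1 + ((1 + 2 * ‖s‖) * 4 + ‖s‖ * (1 + ‖s‖) * 4) := by gcongr
    _ ≤ _ := by nlinarith [norm_nonneg s]

lemma mz_341 {x : ℝ} (hx : 0 < x) (y : ℝ) :
    1 ≤ ‖riemannZeta (1 + x)‖ ^ 3 * ‖riemannZeta (1 + (x + Complex.I * y))‖ ^ 4 *
      ‖riemannZeta (1 + (x + Complex.I * (2 * y : ℝ)))‖ := by
  have := DirichletCharacter.norm_LFunction_product_ge_one (N := 1) 1 hx y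
  simp only [DirichletCharacter.LFunctionTrivChar, DirichletCharacter.LFunction_modOne_eq, norm_mul, norm_pow] at this
  convert! this.le using 4
  · rw [add_assoc]
  · push_cast; ring

lemma mzZ_upper {s : ℂ} (hs : 0 ≤ s.re) : ‖mzZ s‖ ≤ 4 * (1 + ‖s‖) ^ 2 := by
  have h := mzZ_near hs
  have n1 : ‖1 + s‖ ≤ 1 + ‖s‖ := (norm_add_le _ _).trans (by simp)
  have h2 : ‖mzZ s‖ ≤ ‖mzZ s - (1 + s)‖ + ‖1 + s‖ := by
    simpa using norm_add_le (mzZ s - (1+s)) (1+s)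
  nlinarith [norm_nonneg s, norm_nonneg (1+s), mul_le_mul_of_nonneg_left n1 (norm_nonneg s)]

lemma mz_norm_le {σ τ : ℝ} (h0 : 0 ≤ σ) (h1 : σ ≤ 1) : ‖(σ + Complex.I * τ : ℂ)‖ ≤ 1 + |τ| := by
  refine (norm_add_le _ _).trans ?_
  rw [norm_mul, Complex.norm_real, Complex.norm_real, Complex.norm_I, Real.norm_eq_abs,
    Real.norm_eq_abs, abs_of_nonneg h0]
  linarith

lemma mz_lower1 {σ τ : ℝ} (h0 : 0 < σ) (h1 : σ ≤ 1)
    (hs : 1 / 8 ≤ ‖(σ + Complex.I * τ : ℂ)‖) :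
    σ ^ 3 ≤ 2 ^ 32 * (1 + |τ|) ^ 2 * ‖mzZ (σ + Complex.I * τ)‖ ^ 4 := by
  have h := mz_341 h0 τ
  have r1 : (σ + Complex.I * τ : ℂ).re = σ := by simp
  have r2 : (σ + Complex.I * (2 * τ : ℝ) : ℂ).re = σ := by simp
  have e0 := mzZ_eq (s := (σ:ℂ)) (by simpa using h0)
  have e1 := mzZ_eq (s := (σ + Complex.I * τ : ℂ)) (by rw [r1]; exact h0)
  have e2 := mzZ_eq (s := (σ + Complex.I * (2 * τ : ℝ) : ℂ)) (by rw [r2]; exact h0)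
  have u0 := mzZ_upper (s := (σ:ℂ)) (by simpa using h0.le)
  have u2 := mzZ_upper (s := (σ + Complex.I * (2 * τ : ℝ) : ℂ)) (by rw [r2]; exact h0.le)
  have m2 : ‖(σ + Complex.I * τ : ℂ)‖ ≤ ‖(σ + Complex.I * (2 * τ : ℝ) : ℂ)‖ := by
    refine abs_le_of_sq_le_sq' ?_ (norm_nonneg _) |>.2
    rw [← Complex.normSq_eq_norm_sq, ← Complex.normSq_eq_norm_sq, Complex.normSq_apply,
      Complex.normSq_apply]
    simp
    nlinarith [sq_nonneg τ]
  have v2 := mz_norm_le (τ := 2 * τ) h0.le h1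
  rw [abs_mul, abs_two] at v2
  have nσ : ‖(σ:ℂ)‖ = σ := by simp [abs_of_pos h0]
  rw [nσ] at u0
  replace e0 := congrArg norm e0
  replace e1 := congrArg norm e1
  replace e2 := congrArg norm e2
  rw [norm_mul] at e0 e1 e2
  rw [nσ] at e0
  set z0 := ‖riemannZeta (1 + σ)‖
  set z1 := ‖riemannZeta (1 + (σ + Complex.I * τ))‖
  set z2 := ‖riemannZeta (1 + (σ + Complex.I * (2 * τ : ℝ)))‖
  set Z0 := ‖mzZ σ‖
  set Z1 := ‖mzZ (σ + Complex.I * τ)‖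
  set Z2 := ‖mzZ (σ + Complex.I * (2 * τ : ℝ))‖
  set a := ‖(σ + Complex.I * τ : ℂ)‖
  set b := ‖(σ + Complex.I * (2 * τ : ℝ) : ℂ)‖
  set X := 1 + |τ| with hX
  have hX1 : 1 ≤ X := by simp [hX]
  have k0 : Z0 ≤ 16 := by nlinarith
  have k2 : Z2 ≤ 16 * X ^ 2 := by
    have : 1 + b ≤ 2 * X := by linarith
    have hb : 0 ≤ b := norm_nonneg _
    nlinarith
  have main : σ ^ 3 * a ^ 4 * b ≤ Z0 ^ 3 * Z1 ^ 4 * Z2 := by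
    have : Z0 ^ 3 * Z1 ^ 4 * Z2 = (σ ^ 3 * a ^ 4 * b) * (z0 ^ 3 * z1 ^ 4 * z2) := by
      rw [e0, e1, e2]; ring
    rw [this]
    exact le_mul_of_one_le_right (by positivity) h
  have hb : 1 / 8 ≤ b := hs.trans m2
  have low : σ ^ 3 * (1/8) ^ 4 * (1/8) ≤ σ ^ 3 * a ^ 4 * b := by gcongr
  have up : Z0 ^ 3 * Z1 ^ 4 * Z2 ≤ 16 ^ 3 * Z1 ^ 4 * (16 * X ^ 2) := by
    gcongr
  have P : 0 ≤ X ^ 2 * Z1 ^ 4 := by positivity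
  nlinarith

lemma mz_lip {σ η τ : ℝ} (h0 : 0 < σ) (h : σ ≤ η) (h1 : η ≤ 1) :
    ‖mzZ (η + Complex.I * τ) - mzZ (σ + Complex.I * τ)‖ ≤ 80 * (1 + |τ|) ^ 2 * (η - σ) := by
  have hc : ∀ x ∈ Set.Icc σ η, HasDerivWithinAt (fun x : ℝ => mzZ (x + Complex.I * τ))
      (mzZ' (x + Complex.I * τ)) (Set.Icc σ η) x := by
    intro x hx
    have h2 : HasDerivAt (fun z : ℂ => mzZ (z + Complex.I * τ)) (mzZ' (x + Complex.I * τ)) (x:ℂ) := by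
      have := (mzZ_deriv (s := x + Complex.I * τ) (by simp; linarith [hx.1])).comp_add_const (x:ℂ) (Complex.I * τ)
      simpa using this
    exact h2.comp_ofReal.hasDerivWithinAt
  have := (convex_Icc σ η).norm_image_sub_le_of_norm_hasDerivWithin_le (C := 80 * (1 + |τ|) ^ 2) hc
    (fun x hx => by
      refine (mzZ'_bound (by simp; linarith [hx.1])).trans ?_
      have := mz_norm_le (σ := x) (τ := τ) (by linarith [hx.1]) (by linarith [hx.2])
      have h3 := norm_nonneg (x + Complex.I * τ : ℂ)
      nlinarith [abs_nonneg τ]) (Set.left_mem_Icc.2 h) (Set.right_mem_Icc.2 h)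
  rwa [Real.norm_eq_abs, abs_of_nonneg (by linarith : 0 ≤ η - σ)] at this

lemma mz_lower2 {σ τ : ℝ} (h0 : 0 < σ) (h1 : σ ≤ 1)
    (hs : 1 / 8 ≤ ‖(σ + Complex.I * τ : ℂ)‖) (k : ℝ) (hk : 0 < k) (h : (k ^ 4 / (1 + |τ|) ^ 10) ≤ σ) :
    (1 / 2) ^ 8 * k ^ 3 / (1 + |τ|) ^ 8 ≤ ‖mzZ (σ + Complex.I * τ)‖ := by
  have h2 := mz_lower1 h0 h1 hs
  set X := 1 + |τ| with hX
  have hX1 : 0 < X := by positivity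
  refine le_of_pow_le_pow_left₀ (n := 4) (by norm_num) (norm_nonneg _) ?_
  have : (k ^ 4 / X ^ 10) ^ 3 ≤ σ ^ 3 := by gcongr
  have h4 := this.trans h2
  have : ((1 / 2) ^ 8 * k ^ 3 / X ^ 8) ^ 4 = (1/2)^32 / X ^ 2 * (k ^ 4 / X ^ 10) ^ 3 := by
    field_simp
  rw [this]
  calc _ ≤ (1/2)^32 / X ^ 2 * (2 ^ 32 * X ^ 2 * ‖mzZ (σ + Complex.I * τ)‖ ^ 4) := by gcongr
    _ = _ := by field_simp

lemma mz_lower : ∃ c : ℝ, 0 < c ∧ ∀ σ τ : ℝ, 0 < σ → σ ≤ 1 →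
    c / (1 + |τ|) ^ 8 ≤ ‖mzZ (σ + Complex.I * τ)‖ := by
  refine ⟨(1/2) ^ 9 * ((1/2) ^ 16) ^ 3, by positivity, fun σ τ h0 h1 => ?_⟩
  by_cases hs : 1 / 8 ≤ ‖(σ + Complex.I * τ : ℂ)‖
  · by_cases h : ((1/2) ^ 16) ^ 4 / (1 + |τ|) ^ 10 ≤ σ
    · refine le_trans ?_ (mz_lower2 h0 h1 hs ((1/2) ^ 16) (by positivity) h)
      gcongr ?_ / _
      norm_num
    · set η : ℝ := ((1/2) ^ 16) ^ 4 / (1 + |τ|) ^ 10 with hη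
      have hX1 : 1 ≤ 1 + |τ| := by simp
      have hη0 : 0 < η := by positivity
      have hη1 : η ≤ 1 := by
        rw [hη, div_le_one (by positivity)]
        calc _ ≤ (1:ℝ) := by norm_num
          _ ≤ _ := one_le_pow₀ hX1
      have hle : σ ≤ η := (not_le.1 h).le
      have hs2 : 1 / 8 ≤ ‖(η + Complex.I * τ : ℂ)‖ := by
        refine hs.trans ?_
        refine abs_le_of_sq_le_sq' ?_ (norm_nonneg _) |>.2
        rw [← Complex.normSq_eq_norm_sq, ← Complex.normSq_eq_norm_sq, Complex.normSq_apply,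
          Complex.normSq_apply]
        simp
        nlinarith
      have l2 := mz_lower2 hη0 hη1 hs2 ((1/2) ^ 16) (by positivity) le_rfl
      have l3 := mz_lip (τ := τ) h0 hle hη1
      have l4 : ‖mzZ (η + Complex.I * τ)‖ - ‖mzZ (σ + Complex.I * τ)‖ ≤ _ :=
        (norm_sub_norm_le _ _).trans l3
      have l5 : 80 * (1 + |τ|) ^ 2 * (η - σ) ≤ 80 * (1 + |τ|) ^ 2 * η := by gcongr; linarith
      have l6 : 80 * (1 + |τ|) ^ 2 * η = 80 * (1/2) ^ 64 / (1 + |τ|) ^ 8 := by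
        rw [hη]; field_simp
      have l7 : (1/2) ^ 9 * ((1/2) ^ 16) ^ 3 / (1 + |τ|) ^ 8 + 80 * (1/2) ^ 64 / (1 + |τ|) ^ 8
        ≤ (1 / 2) ^ 8 * ((1/2) ^ 16) ^ 3 / (1 + |τ|) ^ 8 := by
        rw [← add_div]; gcongr; norm_num
      linarith
  · have hs := not_le.1 hs
    have n := mzZ_near (s := σ + Complex.I * τ) (by simp; linarith)
    have r : 1 ≤ ‖1 + (σ + Complex.I * τ : ℂ)‖ := by
      refine le_trans ?_ (Complex.re_le_norm _)
      simp; linarith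
    have t : ‖1 + (σ + Complex.I * τ : ℂ)‖ - ‖mzZ (σ + Complex.I * τ)‖ ≤ _ :=
      (norm_sub_norm_le _ _).trans ((norm_sub_rev _ _).le.trans n)
    have : 1 / 2 ≤ ‖mzZ (σ + Complex.I * τ)‖ := by nlinarith
    refine le_trans ?_ this
    rw [div_le_iff₀ (by positivity)]
    have := one_le_pow₀ (n := 8) (show 1 ≤ 1 + |τ| by simp)
    calc _ ≤ (1/2:ℝ) * 1 := by norm_num
      _ ≤ _ := by gcongr

/-- Polynomial bound for the derivative of `1/Z`. -/
lemma mz_inv_deriv : ∃ C : ℝ, 0 < C ∧ ∀ σ τ : ℝ, 0 < σ → σ ≤ 1 →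
    ‖mzZ' (σ + Complex.I * τ) / mzZ (σ + Complex.I * τ) ^ 2‖ ≤ C * (1 + |τ|) ^ 18 := by
  obtain ⟨c, hc, h⟩ := mz_lower
  refine ⟨80 / c ^ 2, by positivity, fun σ τ h0 h1 => ?_⟩
  have l := h σ τ h0 h1
  have u := mzZ'_bound (s := σ + Complex.I * τ) (by simp; linarith)
  have v := mz_norm_le (τ := τ) h0.le h1
  have u2 : ‖mzZ' (σ + Complex.I * τ)‖ ≤ 80 * (1 + |τ|) ^ 2 := by
    have h3 := norm_nonneg (σ + Complex.I * τ : ℂ)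
    nlinarith [abs_nonneg τ]
  rw [norm_div, norm_pow]
  calc _ ≤ 80 * (1 + |τ|) ^ 2 / (c / (1 + |τ|) ^ 8) ^ 2 := by gcongr
    _ = _ := by field_simp

/-- `m(x) = ∑_{n ≤ x} μ(n)/n` -/
noncomputable def mzm (x : ℝ) : ℝ := ∑ n ∈ Icc 1 ⌊x⌋₊, (moebius n : ℝ) / n

lemma mzm_zero {x : ℝ} (hx : x < 1) : mzm x = 0 := by
  unfold mzm
  rw [Nat.floor_eq_zero.2 hx]; simp

lemma mz_abs_moebius (n : ℕ) : |(moebius n : ℝ)| ≤ 1 := by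
  exact_mod_cast abs_moebius_le_one (n := n)

lemma mz_sum_inv (N : ℕ) : ∑ n ∈ Icc 1 N, |(moebius n : ℝ) / n| ≤ 1 + Real.log N := by
  have h := harmonic_le_one_add_log N
  rw [harmonic_eq_sum_Icc] at h
  push_cast at h
  refine le_trans (sum_le_sum fun n _ => ?_) h
  rw [abs_div, Nat.abs_cast, div_eq_mul_inv]
  exact mul_le_of_le_one_left (by positivity) (mz_abs_moebius n)

lemma mzm_le {x : ℝ} (hx : 1 ≤ x) : |mzm x| ≤ 1 + Real.log x := by
  unfold mzm
  refine (abs_sum_le_sum_abs _ _).trans ((mz_sum_inv _).trans ?_)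
  have : 0 < ⌊x⌋₊ := Nat.floor_pos.2 hx
  gcongr
  exact Nat.floor_le (by linarith)

lemma mzm_meas : Measurable mzm := by
  unfold mzm
  exact (measurable_from_nat (f := fun N => ∑ n ∈ Icc 1 N, (moebius n : ℝ) / n)).comp
    Nat.measurable_floor

lemma mzm_rpow {r : ℝ} (hr : 0 < r) {x : ℝ} (hx : 1 ≤ x) : |mzm x| ≤ (1 + 1 / r) * x ^ r := by
  have h1 := mzm_le hx
  have h2 := Real.log_le_rpow_div (zero_le_one.trans hx) hr
  have h3 := Real.one_le_rpow hx hr.le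
  have : (1 + 1 / r) * x ^ r = x ^ r + x ^ r / r := by ring
  linarith

noncomputable def mzM : ℝ → ℂ := fun t => (mzm t : ℂ)

lemma mzM_locInt : MeasureTheory.LocallyIntegrableOn mzM (Set.Ioi 0) := by
  apply MeasureTheory.LocallyIntegrable.locallyIntegrableOn
  have hg : MeasureTheory.LocallyIntegrable (fun t : ℝ => 2 * |t| ^ (1:ℕ)) :=
    Continuous.locallyIntegrable (by fun_prop)
  refine hg.mono (Complex.measurable_ofReal.comp mzm_meas).aestronglyMeasurable ?_
  filter_upwards with t
  by_cases ht : t < 1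
  · simp [mzM, mzm_zero ht]
  · have ht := not_lt.1 ht
    have := mzm_rpow one_pos ht
    simp only [mzM, Complex.norm_real, Real.norm_eq_abs]
    refine this.trans ?_
    norm_num
    exact le_abs_self t

lemma mzM_top {r : ℝ} (hr : 0 < r) : mzM =O[atTop] (fun t : ℝ => t ^ r) := by
  refine Asymptotics.IsBigO.of_bound (1 + 1 / r) ?_
  filter_upwards [eventually_ge_atTop 1] with t ht
  simp only [mzM, Complex.norm_real, Real.norm_eq_abs]
  refine (mzm_rpow hr ht).trans ?_
  gcongr
  exact le_abs_self _

lemma mzM_bot (b : ℝ) : mzM =O[nhdsWithin 0 (Set.Ioi 0)] (fun t : ℝ => t ^ b) := by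
  refine Asymptotics.IsBigO.of_bound 1 ?_
  have : Set.Ioo (0:ℝ) 1 ∈ nhdsWithin (0:ℝ) (Set.Ioi 0) := Ioo_mem_nhdsGT one_pos
  filter_upwards [this] with t ht
  simp [mzM, mzm_zero ht.2]

lemma mzM_mellin {s : ℂ} (hs : 0 < s.re) : mellin mzM (-s) = 1 / mzZ s := by
  have hs0 : s ≠ 0 := by rintro rfl; simp at hs
  have h1 : 1 < (1 + s).re := by simp; linarith
  have h2 := LSeries_eq_mul_integral' (fun n => ((moebius n : ℝ) / n : ℝ)) (r := s.re / 2) (by linarith)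
    (s := s) (by linarith) (by
      refine Asymptotics.IsBigO.of_bound (1 + 1 / (s.re/2)) ?_
      filter_upwards [eventually_ge_atTop 1] with n hn
      have hn1 : (1:ℝ) ≤ n := by exact_mod_cast hn
      rw [Real.norm_of_nonneg (by positivity), Real.norm_of_nonneg (by positivity)]
      have h3 := mz_sum_inv n
      have h4 := Real.log_le_rpow_div (zero_le_one.trans hn1) (show 0 < s.re/2 by linarith)
      have h5 := Real.one_le_rpow hn1 (show 0 ≤ s.re/2 by linarith)
      have : (1 + 1 / (s.re/2)) * (n:ℝ) ^ (s.re/2) = (n:ℝ) ^ (s.re/2) + (n:ℝ) ^ (s.re/2) / (s.re/2) := by ring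
      simp only [Complex.norm_real, Real.norm_eq_abs]
      linarith)
  have h3 : LSeries (fun n => (((moebius n : ℝ) / n : ℝ) : ℂ)) s =
      LSeries (fun n => ((moebius n : ℤ) : ℂ)) (1 + s) := by
    unfold LSeries
    refine tsum_congr fun n => ?_
    rcases Nat.eq_zero_or_pos n with rfl | hn
    · simp
    · have hn0 : (n:ℂ) ≠ 0 := by exact_mod_cast hn.ne'
      rw [LSeries.term_of_ne_zero hn.ne', LSeries.term_of_ne_zero hn.ne', Complex.cpow_add _ _ hn0,
        Complex.cpow_one]
      push_cast
      rw [div_div]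
  have h4 := LSeries_one_mul_Lseries_moebius h1
  rw [LSeries_one_eq_riemannZeta h1] at h4
  have h5 : mellin mzM (-s) = ∫ t in Set.Ioi (1:ℝ),
      (∑ k ∈ Icc 1 ⌊t⌋₊, (((moebius k : ℝ) / k : ℝ) : ℂ)) * (t:ℂ) ^ (-(s + 1)) := by
    unfold mellin
    have h0 : ∀ t : ℝ, t ∉ Set.Ici (1:ℝ) → (t:ℂ) ^ (-s - 1) • mzM t = 0 := by
      intro t ht
      simp [mzM, mzm_zero (not_le.1 ht)]
    rw [← MeasureTheory.integral_Ici_eq_integral_Ioi (x := 1), MeasureTheory.setIntegral_eq_of_subset_of_forall_sdiff_eq_zero measurableSet_Ioi (s := Set.Ici 1)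
      (fun x hx => lt_of_lt_of_le one_pos hx) (fun x hx => h0 x hx.2)]
    refine MeasureTheory.setIntegral_congr_fun measurableSet_Ici fun t _ => ?_
    simp only [mzM, mzm, smul_eq_mul]
    rw [mul_comm, Complex.ofReal_sum]
    congr 2; ring
  rw [h3, ← h5] at h2
  rw [mzZ_eq hs]
  have hz : riemannZeta (1 + s) ≠ 0 := left_ne_zero_of_mul_eq_one h4
  rw [h2] at h4
  field_simp
  linear_combination h4

lemma mzM_deriv {s : ℂ} (hs : 0 < s.re) :
    MellinConvergent (fun t => Real.log t • mzM t) (-s) ∧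
    mellin (fun t => Real.log t • mzM t) (-s) = mzZ' s / mzZ s ^ 2 := by
  have h := mellin_hasDerivAt_of_isBigO_rpow (s := -s) (a := -(s.re / 2)) (b := -s.re-1) mzM_locInt
    (by simpa using mzM_top (half_pos hs)) (by simp; linarith) (mzM_bot _) (by simp)
  refine ⟨h.1, ?_⟩
  have hz : mzZ s ≠ 0 := by
    rw [mzZ_eq hs]
    have h1 : 1 < (1 + s).re := by simp; linarith
    have h4 := LSeries_one_mul_Lseries_moebius h1
    rw [LSeries_one_eq_riemannZeta h1] at h4
    exact mul_ne_zero (by rintro rfl; simp at hs) (left_ne_zero_of_mul_eq_one h4)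
  have h0 : HasDerivAt (fun w : ℂ => mzZ (-w)) (mzZ' s * (-1)) (-s) := by
    have := mzZ_deriv hs.le
    rw [← neg_neg s] at this
    have := this.comp (-s) (hasDerivAt_neg (-s))
    simpa [Function.comp_def] using this
  have h2 : HasDerivAt (fun w : ℂ => (mzZ (-w))⁻¹) (mzZ' s / mzZ s ^ 2) (-s) := by
    have := h0.fun_inv (by simpa using hz)
    convert! this using 1
    simp
  refine h.2.unique (h2.congr_of_eventuallyEq ?_)
  have : {w : ℂ | w.re < 0} ∈ nhds (-s) := (isOpen_lt Complex.continuous_re continuous_const).mem_nhds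
    (by simpa using hs)
  filter_upwards [this] with w hw
  have hw : w.re < 0 := hw
  have := mzM_mellin (s := -w) (by simpa using hw)
  simpa using this

/-- the function whose Fourier transform we study -/
noncomputable def mzφ (σ : ℝ) : ℝ → ℂ := fun u =>
  Real.exp (-(-σ) * u) • (Real.log (Real.exp (-u)) • mzM (Real.exp (-u)))

lemma mzφ_int {σ : ℝ} (hσ : 0 < σ) : MeasureTheory.Integrable (mzφ σ) := by
  have hf := (mzM_deriv (s := (σ:ℂ)) (by simpa using hσ)).1
  set f : ℝ → ℂ := fun t => Real.log t • mzM t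
  have a1 : ∀ x ∈ Set.univ, HasDerivWithinAt (Real.exp ∘ Neg.neg) (-Real.exp (-x)) Set.univ x :=
    fun x _ ↦ mul_neg_one (Real.exp (-x)) ▸
    ((Real.hasDerivAt_exp (-x)).comp x (hasDerivAt_neg x)).hasDerivWithinAt
  have a2 : Real.exp ∘ Neg.neg '' Set.univ = Set.Ioi 0 := by
    rw [Set.image_comp, Set.image_univ_of_surjective neg_surjective, Set.image_univ, Real.range_exp]
  have a3 : Set.univ.InjOn (Real.exp ∘ Neg.neg) :=
    Real.exp_injective.injOn.comp neg_injective.injOn (Set.univ.mapsTo_univ _)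
  rw [MellinConvergent, ← a2, MeasureTheory.integrableOn_image_iff_integrableOn_abs_deriv_smul
      MeasurableSet.univ a1 a3] at hf
  rw [MeasureTheory.integrableOn_univ] at hf
  refine hf.congr (Filter.Eventually.of_forall fun x => ?_)
  have e : ((Real.exp (-x) : ℝ) : ℂ) ^ (-(σ:ℂ) - 1) = ((Real.exp ((-x) * (-σ - 1)) : ℝ) : ℂ) := by
    rw [Real.exp_mul, Complex.ofReal_cpow (Real.exp_pos _).le]
    push_cast; rfl
  simp only [Function.comp_apply, mzφ, abs_neg, abs_of_pos (Real.exp_pos (-x))]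
  rw [e]
  simp only [f, Complex.real_smul, smul_eq_mul]
  rw [← mul_assoc, ← Complex.ofReal_mul, ← Real.exp_add]
  congr 3
  ring_nf

open scoped FourierTransform in
lemma mzφ_fourier : ∃ C : ℝ, 0 < C ∧ ∀ σ ξ : ℝ, 0 < σ → σ ≤ 1 →
    ‖(𝓕 (mzφ σ)) ξ‖ ≤ C * (1 + |ξ|) ^ 18 := by
  obtain ⟨C, hC, h⟩ := mz_inv_deriv
  refine ⟨C * (1 + 2 * Real.pi) ^ 18, by positivity, fun σ ξ h0 h1 => ?_⟩
  have h2 := mellin_eq_fourier (fun t => Real.log t • mzM t)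
    (s := -(σ + Complex.I * (-(2 * Real.pi * ξ) : ℝ)))
  rw [(mzM_deriv (s := σ + Complex.I * (-(2 * Real.pi * ξ) : ℝ)) (by simpa using h0)).2] at h2
  have h3 := h σ (-(2 * Real.pi * ξ)) h0 h1
  rw [h2] at h3
  have e1 : (-(σ + Complex.I * (-(2 * Real.pi * ξ) : ℝ)) : ℂ).re = -σ := by simp
  have e2 : (-(σ + Complex.I * (-(2 * Real.pi * ξ) : ℝ)) : ℂ).im / (2 * Real.pi) = ξ := by
    have := Real.pi_pos.ne'
    simp [field]
  rw [e1, e2] at h3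
  refine h3.trans ?_
  rw [mul_assoc C, ← mul_pow]
  gcongr
  rw [abs_neg, abs_mul, abs_of_pos (by positivity)]
  nlinarith [abs_nonneg ξ, Real.pi_pos]

lemma mz_harm (N M : ℕ) (h : N + 1 ≤ M) :
    ∑ n ∈ Ioc N M, (1:ℝ) / n ≤ 1 / (N + 1) + Real.log (M / (N + 1)) := by
  induction M, h using Nat.le_induction with
  | base =>
    have : (N:ℝ) + 1 ≠ 0 := by positivity
    simp [Nat.Ioc_succ_singleton, this]
  | succ M hM ih =>
    rw [Finset.sum_Ioc_succ_top (by omega)]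
    have hM0 : (0:ℝ) < M := by
      have : 0 < M := by omega
      exact_mod_cast this
    have h1 := Real.one_sub_inv_le_log_of_pos (show (0:ℝ) < (M + 1) / M by positivity)
    have h2 : Real.log (((M+1:ℕ):ℝ) / (N + 1)) = Real.log (M / (N+1)) + Real.log ((M+1)/M) := by
      rw [← Real.log_mul (by positivity) (by positivity)]
      congr 1; push_cast; field_simp
    rw [h2]
    have h3 : 1 - ((M + 1 : ℝ) / M)⁻¹ = 1 / ((M+1:ℕ):ℝ) := by
      push_cast; field_simp; ring
    linarith

lemma mzm_osc {x y : ℝ} (hx : 0 < x) (hxy : x ≤ y) :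
    |mzm y - mzm x| ≤ 1 / x + Real.log (y / x) := by
  have hl : 0 ≤ Real.log (y / x) := Real.log_nonneg (by rwa [one_le_div hx])
  have hf : ⌊x⌋₊ ≤ ⌊y⌋₊ := Nat.floor_mono hxy
  have e : mzm y - mzm x = ∑ n ∈ Ioc ⌊x⌋₊ ⌊y⌋₊, (moebius n : ℝ) / n := by
    unfold mzm
    rw [sub_eq_iff_eq_add', ← Finset.sum_union]
    · congr 1; ext n; simp; omega
    · rw [Finset.disjoint_left]; intro n; simp; omega
  rw [e]
  rcases hf.eq_or_lt with h | h
  · rw [h]; simp; positivity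
  · have h1 := mz_harm _ _ h
    have h2 : |∑ n ∈ Ioc ⌊x⌋₊ ⌊y⌋₊, (moebius n : ℝ) / n| ≤ ∑ n ∈ Ioc ⌊x⌋₊ ⌊y⌋₊, (1:ℝ) / n := by
      refine (abs_sum_le_sum_abs _ _).trans (sum_le_sum fun n _ => ?_)
      rw [abs_div, Nat.abs_cast]
      gcongr
      exact mz_abs_moebius n
    have h3 : x ≤ (⌊x⌋₊:ℝ) + 1 := (Nat.lt_floor_add_one x).le
    have h4 : (⌊y⌋₊ : ℝ) ≤ y := Nat.floor_le (hx.le.trans hxy)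
    have h5 : (0:ℝ) < ⌊y⌋₊ := by
      have : 0 < ⌊y⌋₊ := by omega
      exact_mod_cast this
    have h6 : Real.log (⌊y⌋₊ / ((⌊x⌋₊:ℝ) + 1)) ≤ Real.log (y / x) := by
      have hy : 0 ≤ y := hx.le.trans hxy
      gcongr
    have h7 : 1 / ((⌊x⌋₊:ℝ) + 1) ≤ 1 / x := by gcongr
    linarith

/-- `f(t) = m(e^t)` -/
noncomputable def mzf (t : ℝ) : ℝ := mzm (Real.exp t)

lemma mzf_osc {a b : ℝ} (h : b ≤ a) : |mzf a - mzf b| ≤ (a - b) + Real.exp (-b) := by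
  have := mzm_osc (Real.exp_pos b) (Real.exp_le_exp.2 h)
  rw [← Real.exp_sub, Real.log_exp, one_div, ← Real.exp_neg] at this
  unfold mzf; linarith

lemma mzf_le (t : ℝ) : |mzf t| ≤ 1 + |t| := by
  unfold mzf
  by_cases h : Real.exp t < 1
  · rw [mzm_zero h]; simp; positivity
  · have := mzm_le (not_lt.1 h)
    rw [Real.log_exp] at this
    linarith [le_abs_self t]

lemma mzf_neg {t : ℝ} (h : t < 0) : mzf t = 0 := mzm_zero (by simpa using h)

lemma mz_te (T : ℝ) : T * Real.exp (-(T/2)) ≤ 2 := by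
  have h := Real.add_one_le_exp (T/2)
  rw [Real.exp_neg, ← div_eq_mul_inv, div_le_iff₀ (Real.exp_pos _)]
  linarith

lemma mz_g_diff {T : ℝ} (hT : 1 ≤ T) (u : ℝ) :
    |T * mzf T - (T - u) * mzf (T - u)| ≤ 5 * T * |u| + u ^ 2 + 2 := by
  by_cases h : u ≤ T / 2
  · have h1 : |mzf T - mzf (T - u)| ≤ |u| + Real.exp (-(T/2)) := by
      rcases le_total 0 u with hu | hu
      · have := mzf_osc (a := T) (b := T - u) (by linarith)
        have h2 : Real.exp (-(T - u)) ≤ Real.exp (-(T/2)) := Real.exp_le_exp.2 (by linarith)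
        rw [abs_of_nonneg hu]; linarith
      · have := mzf_osc (a := T - u) (b := T) (by linarith)
        have h2 : Real.exp (-T) ≤ Real.exp (-(T/2)) := Real.exp_le_exp.2 (by linarith)
        rw [abs_of_nonpos hu, abs_sub_comm]; linarith
    have h2 := mzf_le (T - u)
    have h3 : |T - u| ≤ T + |u| := by
      refine (abs_sub _ _).trans ?_
      rw [abs_of_pos (by linarith : 0 < T)]
    have e : T * mzf T - (T - u) * mzf (T - u) = u * mzf (T - u) + T * (mzf T - mzf (T - u)) := by ring
    rw [e]
    have h4 := abs_add_le (u * mzf (T - u)) (T * (mzf T - mzf (T - u)))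
    rw [abs_mul, abs_mul, abs_of_pos (by linarith : 0 < T)] at h4
    have h5 := mz_te T
    have h6 : |u| * |mzf (T - u)| ≤ |u| * (1 + (T + |u|)) := by gcongr; linarith
    have h7 : T * |mzf T - mzf (T - u)| ≤ T * (|u| + Real.exp (-(T/2))) := by gcongr
    have h8 : u ^ 2 = |u| * |u| := by rw [← sq, sq_abs]
    nlinarith [abs_nonneg u]
  · have h := not_le.1 h
    have hu : 0 < u := by linarith
    have h1 := mzf_le T
    have h2 := mzf_le (T - u)
    have h3 : |T - u| ≤ u := by rw [abs_le]; constructor <;> linarith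
    have h4 := abs_sub (T * mzf T) ((T - u) * mzf (T - u))
    rw [abs_mul, abs_mul] at h4
    rw [abs_of_pos (by linarith : 0 < T)] at h1 h4
    rw [abs_of_pos hu]
    have h5 : |T - u| * |mzf (T - u)| ≤ u * (1 + u) := by gcongr; linarith
    have h6 : T * |mzf T| ≤ T * (1 + T) := by gcongr
    nlinarith

lemma mz_gauss_int (k : ℕ) : MeasureTheory.Integrable
    (fun x : ℝ => (1 + |x|) ^ (2 * k) * Real.exp (-Real.pi * x ^ 2)) := by
  have h1 : MeasureTheory.Integrable (fun x : ℝ => Real.exp (-Real.pi * x ^ 2)) :=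
    integrable_exp_neg_mul_sq Real.pi_pos
  have h2 : MeasureTheory.Integrable (fun x : ℝ => x ^ (2 * k) * Real.exp (-Real.pi * x ^ 2)) := by
    have := integrable_rpow_mul_exp_neg_mul_sq Real.pi_pos (s := ((2 * k : ℕ):ℝ)) (by
      have : (0:ℝ) ≤ ((2 * k : ℕ):ℝ) := by positivity
      linarith)
    simpa only [Real.rpow_natCast] using this
  refine ((h1.add h2).const_mul (2 ^ (2 * k - 1))).mono' (by fun_prop) ?_
  filter_upwards with x
  rw [Real.norm_of_nonneg (by positivity)]
  simp only [Pi.add_apply]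
  have := add_pow_le (zero_le_one' ℝ) (abs_nonneg x) (2 * k)
  rw [one_pow, Even.pow_abs (even_two_mul k)] at this
  calc _ ≤ 2 ^ (2 * k - 1) * (1 + x ^ (2 * k)) * Real.exp (-Real.pi * x ^ 2) := by gcongr
    _ = _ := by ring

lemma mz_psi_norm (δ a ξ : ℝ) :
    ‖Complex.exp (-Real.pi * ((δ^2 : ℝ):ℂ) * (ξ:ℂ) ^ 2 + 2 * Real.pi * (Complex.I * a) * ξ)‖
      = Real.exp (-Real.pi * (δ * ξ) ^ 2) := by
  rw [Complex.norm_exp]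
  congr 1
  have : (-Real.pi * ((δ^2 : ℝ):ℂ) * (ξ:ℂ) ^ 2 + 2 * Real.pi * (Complex.I * a) * ξ)
    = ((-Real.pi * (δ * ξ) ^ 2 : ℝ):ℂ) + ((2 * Real.pi * a * ξ : ℝ):ℂ) * Complex.I := by
    push_cast; ring
  rw [this]
  simp only [Complex.add_re, Complex.re_ofReal_mul, Complex.I_re, Complex.ofReal_re]
  ring

open scoped FourierTransform in
lemma mz_smooth1 : ∃ C : ℝ, 0 < C ∧ ∀ σ δ a : ℝ, 0 < σ → σ ≤ 1 → 0 < δ → δ ≤ 1 →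
    ‖∫ v : ℝ, mzφ σ (a + δ * v) * ((Real.exp (-Real.pi * v ^ 2) : ℝ) : ℂ)‖ ≤ C * (δ⁻¹) ^ 19 := by
  obtain ⟨C, hC, h⟩ := mzφ_fourier
  set G : ℝ → ℝ := fun x => (1 + |x|) ^ (2 * 9) * Real.exp (-Real.pi * x ^ 2) with hG
  have hGi : MeasureTheory.Integrable G := mz_gauss_int 9
  have hG0 : 0 ≤ ∫ x, G x := MeasureTheory.integral_nonneg fun x => by simp only [hG]; positivity
  refine ⟨C * (∫ x, G x + 0) + C, by simp only [add_zero]; positivity, fun σ δ a h0 h1 hδ hδ1 => ?_⟩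
  simp only [add_zero]
  set ψ : ℝ → ℂ := fun ξ =>
    Complex.exp (-Real.pi * ((δ^2 : ℝ):ℂ) * (ξ:ℂ) ^ 2 + 2 * Real.pi * (Complex.I * a) * ξ) with hψ
  have hb : 0 < ((δ^2 : ℝ):ℂ).re := by rw [Complex.ofReal_re]; positivity
  have hψi : MeasureTheory.Integrable ψ := by
    have := integrable_cexp_quadratic (b := Real.pi * ((δ^2 : ℝ):ℂ)) (by
      rw [Complex.re_ofReal_mul]; have := Real.pi_pos; positivity) (2 * Real.pi * (Complex.I * a)) 0
    refine this.congr (Filter.Eventually.of_forall fun x => ?_)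
    simp only [hψ]; congr 1; ring
  have key : ∫ ξ, (𝓕 (mzφ σ)) ξ * ψ ξ = ∫ x, mzφ σ x * (𝓕 ψ) x := by
    simpa using! VectorFourier.integral_bilin_fourierIntegral_eq_flip (.mul ℂ ℂ) (L := innerₗ ℝ)
      Real.continuous_fourierChar continuous_inner (mzφ_int h0) hψi
  have hF : 𝓕 ψ = fun t : ℝ => ((1 / δ * Real.exp (-Real.pi * ((t - a) / δ) ^ 2) : ℝ) : ℂ) := by
    rw [hψ, fourier_gaussian_pi' hb]
    funext t
    have e1 : (((δ^2 : ℝ):ℂ)) ^ (1 / 2 : ℂ) = (δ:ℂ) := by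
      have : (((δ^2 : ℝ):ℂ)) ^ (1 / 2 : ℂ) = (((δ^2:ℝ) ^ (1/2:ℝ) : ℝ) : ℂ) := by
        rw [Complex.ofReal_cpow (by positivity)]; push_cast; rfl
      rw [this, ← Real.sqrt_eq_rpow, Real.sqrt_sq hδ.le]
    rw [e1]
    push_cast
    congr 2
    have : (δ:ℂ) ≠ 0 := by exact_mod_cast hδ.ne'
    field_simp
    rw [Complex.I_sq]; ring
  have cv : ∫ x, mzφ σ x * (𝓕 ψ) x
      = ∫ v : ℝ, mzφ σ (a + δ * v) * ((Real.exp (-Real.pi * v ^ 2) : ℝ) : ℂ) := by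
    rw [hF]
    rw [← MeasureTheory.integral_add_left_eq_self _ a]
    have := MeasureTheory.Measure.integral_comp_mul_left (fun y : ℝ => mzφ σ (a + y) *
      ((1 / δ * Real.exp (-Real.pi * ((a + y - a) / δ) ^ 2) : ℝ) : ℂ)) δ
    rw [abs_of_pos (inv_pos.2 hδ)] at this
    have h2 := congrArg (fun z => δ • z) this
    simp only [smul_smul, mul_inv_cancel₀ hδ.ne', one_smul] at h2
    rw [← h2, ← MeasureTheory.integral_smul]
    congr 1; funext v
    have : (a + δ * v - a) / δ = v := by field_simp; ring
    rw [this]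
    have : (δ:ℂ) ≠ 0 := by exact_mod_cast hδ.ne'
    rw [Complex.real_smul]
    push_cast
    field_simp
  rw [← cv, ← key]
  have hb2 : MeasureTheory.Integrable (fun ξ : ℝ => C * (δ⁻¹) ^ 18 * G (δ * ξ)) :=
    (hGi.comp_mul_left' hδ.ne').const_mul _
  have bd : ∀ ξ : ℝ, ‖(𝓕 (mzφ σ)) ξ * ψ ξ‖ ≤ C * (δ⁻¹) ^ 18 * G (δ * ξ) := by
    intro ξ
    rw [norm_mul]
    have h3 := h σ ξ h0 h1
    have h4 : ‖ψ ξ‖ = Real.exp (-Real.pi * (δ * ξ) ^ 2) := mz_psi_norm δ a ξ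
    rw [h4]
    have h5 : 1 + |ξ| ≤ δ⁻¹ * (1 + |δ * ξ|) := by
      rw [abs_mul, abs_of_pos hδ, mul_add, ← mul_assoc, inv_mul_cancel₀ hδ.ne', one_mul, mul_one]
      have := (one_le_inv₀ hδ).2 hδ1
      linarith
    calc _ ≤ C * (δ⁻¹ * (1 + |δ * ξ|)) ^ 18 * Real.exp (-Real.pi * (δ * ξ) ^ 2) := by
          refine mul_le_mul_of_nonneg_right (h3.trans ?_) (Real.exp_pos _).le
          gcongr
      _ = _ := by simp only [hG]; ring
  have h6 := MeasureTheory.norm_integral_le_of_norm_le hb2 (Filter.Eventually.of_forall bd)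
  rw [MeasureTheory.integral_const_mul, MeasureTheory.Measure.integral_comp_mul_left,
    abs_of_pos (inv_pos.2 hδ), smul_eq_mul] at h6
  have : 0 < C * δ⁻¹ ^ 19 := by positivity
  calc _ ≤ _ := h6
    _ ≤ _ := by
      have e : (C * (∫ x, G x) + C) * δ⁻¹ ^ 19 = C * δ⁻¹ ^ 18 * (δ⁻¹ * ∫ x, G x) + C * δ⁻¹ ^ 19 := by ring
      linarith

lemma mzφ_eq (σ u : ℝ) : mzφ σ u = ((Real.exp (σ * u) * ((-u) * mzf (-u)) : ℝ) : ℂ) := by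
  simp only [mzφ, mzM, mzf, Real.log_exp, Complex.real_smul, neg_neg]
  push_cast; ring

lemma mzf_meas : Measurable mzf := mzm_meas.comp Real.measurable_exp

lemma mzφ_meas (σ : ℝ) : Measurable (mzφ σ) := by
  have : mzφ σ = fun u => ((Real.exp (σ * u) * ((-u) * mzf (-u)) : ℝ) : ℂ) := funext (mzφ_eq σ)
  rw [this]
  have := mzf_meas
  fun_prop

lemma mzφ_norm_le {σ : ℝ} (hσ : 0 < σ) (u : ℝ) : ‖mzφ σ u‖ ≤ (1 + |u|) ^ 2 := by
  rw [mzφ_eq, Complex.norm_real, Real.norm_eq_abs]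
  rcases lt_or_ge 0 u with h | h
  · rw [mzf_neg (by linarith)]; simp; positivity
  · rw [abs_mul, abs_mul, abs_neg, abs_of_pos (Real.exp_pos _)]
    have h1 : Real.exp (σ * u) ≤ 1 := Real.exp_le_one_iff.2 (mul_nonpos_of_nonneg_of_nonpos hσ.le h)
    have h2 := mzf_le (-u)
    rw [abs_neg] at h2
    calc _ ≤ 1 * (|u| * (1 + |u|)) := by gcongr
      _ ≤ _ := by nlinarith [abs_nonneg u]

lemma mz_bnd_aux {T δ : ℝ} (hT : 1 ≤ T) (hδ : 0 < δ) (hδ1 : δ ≤ 1) (v : ℝ) :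
    (1 + |-T + δ * v|) ^ 2 ≤ (1 + T) ^ 2 * (1 + |v|) ^ (2 * 1) := by
  rw [mul_one, ← mul_pow]
  gcongr
  have h := abs_add_le (-T) (δ * v)
  rw [abs_neg, abs_of_pos (by linarith : 0 < T), abs_mul, abs_of_pos hδ] at h
  nlinarith [abs_nonneg v]

lemma mz_smooth2 : ∃ C : ℝ, 0 < C ∧ ∀ T δ : ℝ, 1 ≤ T → 0 < δ → δ ≤ 1 →
    |∫ v : ℝ, (T - δ * v) * mzf (T - δ * v) * Real.exp (-Real.pi * v ^ 2)| ≤ C * (δ⁻¹) ^ 19 := by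
  obtain ⟨C, hC, h⟩ := mz_smooth1
  refine ⟨C, hC, fun T δ hT hδ hδ1 => ?_⟩
  have hlim : Tendsto (fun n : ℕ => ∫ v : ℝ, mzφ (1 / ((n:ℝ) + 1)) (-T + δ * v) *
      ((Real.exp (-Real.pi * v ^ 2) : ℝ) : ℂ)) atTop (nhds (∫ v : ℝ,
        (((T - δ * v) * mzf (T - δ * v) * Real.exp (-Real.pi * v ^ 2) : ℝ) : ℂ))) := by
    refine MeasureTheory.tendsto_integral_of_dominated_convergence
      (fun v => (1 + T) ^ 2 * ((1 + |v|) ^ (2 * 1) * Real.exp (-Real.pi * v ^ 2))) ?_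
      ((mz_gauss_int 1).const_mul _) ?_ ?_
    · intro n
      have := mzφ_meas (1 / ((n:ℝ) + 1))
      exact Measurable.aestronglyMeasurable (by fun_prop)
    · intro n
      filter_upwards with v
      rw [norm_mul, Complex.norm_real, Real.norm_of_nonneg (Real.exp_pos _).le, ← mul_assoc]
      gcongr
      exact (mzφ_norm_le (by positivity) _).trans (mz_bnd_aux hT hδ hδ1 v)
    · filter_upwards with v
      have e : ∀ n : ℕ, mzφ (1 / ((n:ℝ) + 1)) (-T + δ * v) * ((Real.exp (-Real.pi * v ^ 2) : ℝ) : ℂ)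
          = ((Real.exp (1 / ((n:ℝ) + 1) * (-T + δ * v)) * ((T - δ * v) * mzf (T - δ * v)) *
            Real.exp (-Real.pi * v ^ 2) : ℝ) : ℂ) := by
        intro n
        rw [mzφ_eq, ← Complex.ofReal_mul]
        have : -(-T + δ * v) = T - δ * v := by ring
        rw [this]
      simp_rw [e]
      refine (Complex.continuous_ofReal.tendsto _).comp ?_
      have h1 : Tendsto (fun n : ℕ => Real.exp (1 / ((n:ℝ) + 1) * (-T + δ * v))) atTop (nhds 1) := by
        have := (Real.continuous_exp.tendsto _).comp
          (tendsto_one_div_add_atTop_nhds_zero_nat (𝕜 := ℝ).mul_const (-T + δ * v))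
        simpa [Function.comp_def] using this
      have h2 := (h1.mul_const ((T - δ * v) * mzf (T - δ * v))).mul_const (Real.exp (-Real.pi * v ^ 2))
      rw [one_mul] at h2
      exact h2
  have := le_of_tendsto hlim.norm (Filter.Eventually.of_forall fun n =>
    h (1 / ((n:ℝ) + 1)) δ (-T) (by positivity) (by
      rw [div_le_one (by positivity)]; have : (0:ℝ) ≤ n := by positivity
      linarith) hδ hδ1)
  rw [integral_complex_ofReal, Complex.norm_real, Real.norm_eq_abs] at this
  exact this

lemma mz_gauss_one : ∫ v : ℝ, Real.exp (-Real.pi * v ^ 2) = 1 := by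
  rw [integral_gaussian, div_self Real.pi_pos.ne', Real.sqrt_one]

lemma mz_smooth3 : ∃ C : ℝ, 0 < C ∧ ∀ T δ : ℝ, 1 ≤ T → 0 < δ → δ ≤ 1 →
    T * |mzf T| ≤ C * (δ⁻¹) ^ 19 + C * (T * δ) + C := by
  obtain ⟨C, hC, h⟩ := mz_smooth2
  set K := ∫ v : ℝ, (1 + |v|) ^ (2 * 1) * Real.exp (-Real.pi * v ^ 2) with hK
  have hK0 : 0 ≤ K := MeasureTheory.integral_nonneg fun x => by positivity
  refine ⟨C + 5 * K, by positivity, fun T δ hT hδ hδ1 => ?_⟩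
  have h1 := h T δ hT hδ hδ1
  set g : ℝ → ℝ := fun v => (T - δ * v) * mzf (T - δ * v) * Real.exp (-Real.pi * v ^ 2) with hg
  have hgi : MeasureTheory.Integrable g := by
    refine ((mz_gauss_int 1).const_mul ((1 + T) ^ 2)).mono' ?_ ?_
    · have := mzf_meas
      exact Measurable.aestronglyMeasurable (by fun_prop)
    · filter_upwards with v
      rw [hg, norm_mul, Real.norm_of_nonneg (Real.exp_pos _).le, ← mul_assoc]
      gcongr
      refine le_trans ?_ (mz_bnd_aux hT hδ hδ1 v)
      have e : |-T + δ * v| = |T - δ * v| := by rw [← abs_neg]; congr 1; ring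
      rw [Real.norm_eq_abs, abs_mul, e]
      have := mzf_le (T - δ * v)
      nlinarith [abs_nonneg (T - δ * v), abs_nonneg (mzf (T - δ * v))]
  have hi : MeasureTheory.Integrable (fun v : ℝ => T * mzf T * Real.exp (-Real.pi * v ^ 2)) :=
    (integrable_exp_neg_mul_sq Real.pi_pos).const_mul _
  have e : T * mzf T = (∫ v : ℝ, g v) + ∫ v : ℝ, (T * mzf T * Real.exp (-Real.pi * v ^ 2) - g v) := by
    rw [MeasureTheory.integral_sub hi hgi, MeasureTheory.integral_const_mul, mz_gauss_one]; ring
  have hb : |∫ v : ℝ, (T * mzf T * Real.exp (-Real.pi * v ^ 2) - g v)| ≤ (5 * (T * δ) + 2) * K := by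
    rw [← Real.norm_eq_abs, hK, ← MeasureTheory.integral_const_mul]
    refine MeasureTheory.norm_integral_le_of_norm_le ((mz_gauss_int 1).const_mul _)
      (Filter.Eventually.of_forall fun v => ?_)
    have h2 := mz_g_diff hT (δ * v)
    have e2 : T * mzf T * Real.exp (-Real.pi * v ^ 2) - g v
      = (T * mzf T - (T - δ * v) * mzf (T - δ * v)) * Real.exp (-Real.pi * v ^ 2) := by
      simp only [hg]; ring
    rw [e2, norm_mul, Real.norm_of_nonneg (Real.exp_pos _).le, ← mul_assoc, Real.norm_eq_abs]
    gcongr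
    refine h2.trans ?_
    rw [abs_mul, abs_of_pos hδ]
    have h3 : (δ * v) ^ 2 ≤ T * δ * |v| ^ 2 := by
      rw [mul_pow, sq_abs]
      gcongr
      nlinarith
    have h4 : 0 < T * δ := by positivity
    have e3 : (5 * (T * δ) + 2) * (1 + |v|) ^ (2 * 1) = 5 * (T * δ) + 2 + 10 * (T * δ * |v|) + 4 * |v|
      + 5 * (T * δ * |v| ^ 2) + 2 * |v| ^ 2 := by ring
    have e4 : 5 * T * (δ * |v|) = 5 * (T * δ * |v|) := by ring
    rw [e3, e4]
    linarith [abs_nonneg v, mul_nonneg h4.le (abs_nonneg v), mul_nonneg h4.le (sq_nonneg |v|), sq_nonneg |v|]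
  have h5 : T * |mzf T| = |T * mzf T| := by rw [abs_mul, abs_of_pos (by linarith : 0 < T)]
  rw [h5, e]
  refine (abs_add_le _ _).trans ?_
  have h6 : 0 < T * δ := by positivity
  have h7 : 0 < δ⁻¹ ^ 19 := by positivity
  nlinarith [mul_nonneg hK0 h7.le, mul_pos hC h6]

/-- decay of `m` -/
lemma mzf_decay : ∃ C : ℝ, 0 < C ∧ ∀ T : ℝ, 1 ≤ T → |mzf T| ≤ C * T ^ (-(1/20) : ℝ) := by
  obtain ⟨C, hC, h⟩ := mz_smooth3
  refine ⟨3 * C, by positivity, fun T hT => ?_⟩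
  have hT0 : 0 < T := by linarith
  set δ := T ^ (-(1/20) : ℝ) with hδ
  have hδ0 : 0 < δ := by positivity
  have hδ1 : δ ≤ 1 := Real.rpow_le_one_of_one_le_of_nonpos hT (by norm_num)
  have h1 := h T δ hT hδ0 hδ1
  have e : (δ⁻¹) ^ 20 = T := by
    rw [hδ, ← Real.rpow_neg hT0.le, neg_neg, ← Real.rpow_natCast, ← Real.rpow_mul hT0.le]
    norm_num
  have e1 : (δ⁻¹) ^ 19 = T * δ := by
    rw [← e, pow_succ _ 19]; field_simp
  have h2 : 1 ≤ T * δ := by rw [← e1]; exact one_le_pow₀ ((one_le_inv₀ hδ0).2 hδ1)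
  rw [e1] at h1
  have h3 : T * |mzf T| ≤ T * (3 * C * δ) := by nlinarith
  exact le_of_mul_le_mul_left h3 hT0

lemma mzm_decay : ∃ C : ℝ, 0 < C ∧ ∀ x : ℝ, 1 ≤ x → |mzm x| ≤ C * (1 + Real.log x) ^ (-(1/20) : ℝ) := by
  obtain ⟨C, hC, h⟩ := mzf_decay
  refine ⟨2 * C + 4, by positivity, fun x hx => ?_⟩
  have hl := Real.log_nonneg hx
  rcases le_total 1 (Real.log x) with h1 | h1
  · have h2 := h _ h1
    rw [mzf, Real.exp_log (by linarith)] at h2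
    refine h2.trans ?_
    have h3 : (Real.log x) ^ (-(1/20) : ℝ) ≤ 2 * (1 + Real.log x) ^ (-(1/20) : ℝ) := by
      have h4 : (2 * Real.log x) ^ (-(1/20) : ℝ) ≤ (1 + Real.log x) ^ (-(1/20) : ℝ) :=
        Real.rpow_le_rpow_of_nonpos (by linarith) (by linarith) (by norm_num)
      rw [Real.mul_rpow (by norm_num) hl] at h4
      have h5 : (2:ℝ)⁻¹ ≤ 2 ^ (-(1/20) : ℝ) := by
        rw [← Real.rpow_neg_one]
        exact Real.rpow_le_rpow_of_exponent_le (by norm_num) (by norm_num)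
      have h6 : 0 ≤ (Real.log x) ^ (-(1/20) : ℝ) := by positivity
      nlinarith
    have h6 : 0 ≤ (1 + Real.log x) ^ (-(1/20) : ℝ) := by positivity
    nlinarith
  · have h2 := mzm_le hx
    have h5 : (2:ℝ)⁻¹ ≤ (1 + Real.log x) ^ (-(1/20) : ℝ) := by
      calc (2:ℝ)⁻¹ ≤ 2 ^ (-(1/20) : ℝ) := by
            rw [← Real.rpow_neg_one]
            exact Real.rpow_le_rpow_of_exponent_le (by norm_num) (by norm_num)
        _ ≤ _ := Real.rpow_le_rpow_of_nonpos (by linarith) (by linarith) (by norm_num)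
    nlinarith

lemma mz_sq_le (m : ℕ) : m ^ 2 ≤ 4 * 2 ^ m := by
  induction m with
  | zero => norm_num
  | succ k ih =>
    rcases lt_or_ge k 3 with h | h
    · interval_cases k <;> norm_num
    · rw [pow_succ 2 k]; nlinarith

/-- dyadic prime count -/
lemma mz_block_card (j : ℕ) :
    ((((Finset.Ico (2^j) (2^(j+1))).filter (fun q => q = 1 ∨ q.Prime)).card : ℕ) : ℝ)
      ≤ 16 * 2 ^ j / (j + 1) := by
  have h1 : ((Finset.Ico (2^j) (2^(j+1))).filter (fun q => q = 1 ∨ q.Prime)) ⊆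
      insert 1 ((Finset.range (2^(j+1)+1)).filter Nat.Prime) := by
    intro q; simp only [mem_filter, mem_Ico, mem_insert, mem_range]
    rintro ⟨⟨a, b⟩, c | c⟩
    · exact Or.inl c
    · exact Or.inr ⟨by omega, c⟩
  have h2 := (card_le_card h1).trans (card_insert_le _ _)
  have h3 : ((Finset.range (2^(j+1)+1)).filter Nat.Prime).card = Nat.primeCounting (2^(j+1)) := by
    rw [Nat.primeCounting, Nat.primeCounting', Nat.count_eq_card_filter_range]
  rw [h3] at h2
  have h4 := Chebyshev.pi_le_log4_mul_div (x := (2:ℝ)^(j+1)) (by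
    exact one_lt_pow₀ (by norm_num) (by omega))
  have e : ⌊(2:ℝ)^(j+1)⌋₊ = 2^(j+1) := by
    have : ((2:ℝ)^(j+1)) = ((2^(j+1) : ℕ):ℝ) := by push_cast; rfl
    rw [this, Nat.floor_natCast]
  rw [e] at h4
  have hj : (0:ℝ) < (j:ℝ) + 1 := by positivity
  have hl2 : 0 < Real.log 2 := Real.log_pos (by norm_num)
  have h5 : Real.log 4 * 2^(j+1) / Real.log √(2^(j+1)) = 8 * 2^j / (j+1) := by
    rw [Real.log_sqrt (by positivity), Real.log_pow]
    have : Real.log 4 = 2 * Real.log 2 := by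
      rw [show (4:ℝ) = 2^2 by norm_num, Real.log_pow]; norm_num
    rw [this]; push_cast
    field_simp; ring
  rw [h5] at h4
  have h6 : √((2:ℝ)^(j+1)) ≤ 4 * 2^j / (j+1) := by
    rw [Real.sqrt_le_left (by positivity), div_pow, le_div_iff₀ (by positivity)]
    have := mz_sq_le (j+1)
    have h7 : ((j:ℝ)+1)^2 ≤ 4 * 2^(j+1) := by exact_mod_cast this
    calc (2:ℝ)^(j+1) * ((j:ℝ)+1)^2 ≤ 2^(j+1) * (4 * 2^(j+1)) := by gcongr
      _ = _ := by ring
  have h8 : (1:ℝ) ≤ 4 * 2^j / (j+1) := by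
    rw [le_div_iff₀ hj]
    have : j + 1 ≤ 2^j := Nat.lt_two_pow_self
    have h9 : ((j:ℝ)+1) ≤ 2^j := by exact_mod_cast this
    nlinarith
  have h9 : ((((Finset.Ico (2^j) (2^(j+1))).filter (fun q => q = 1 ∨ q.Prime)).card : ℕ) : ℝ)
    ≤ (Nat.primeCounting (2^(j+1)) : ℝ) + 1 := by exact_mod_cast h2
  have e2 : (16:ℝ) * 2^j / (j+1) = 8 * 2^j / (j+1) + 4 * 2^j / (j+1) + 4 * 2^j / (j+1) := by ring
  linarith

lemma mz_pair {a b : ℝ} (ha : 0 < a) (hb : 0 < b) :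
    1 / a * b ^ (-(1/20) : ℝ) ≤ ((a + b) / 2) ^ (-(1/20) : ℝ) * (1 / a + 1 / b) := by
  rcases le_total a b with h | h
  · have h1 : b ^ (-(1/20) : ℝ) ≤ ((a + b) / 2) ^ (-(1/20) : ℝ) :=
      Real.rpow_le_rpow_of_nonpos (by linarith) (by linarith) (by norm_num)
    have h2 : 0 ≤ ((a + b) / 2) ^ (-(1/20) : ℝ) := by positivity
    calc 1 / a * b ^ (-(1/20) : ℝ) ≤ 1 / a * ((a + b) / 2) ^ (-(1/20) : ℝ) := by gcongr
      _ ≤ _ := by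
        rw [mul_add, mul_comm]
        have : 0 ≤ ((a + b) / 2) ^ (-(1/20) : ℝ) * (1 / b) := by positivity
        linarith
  · have h1 : a ^ (-(1/20) : ℝ) ≤ ((a + b) / 2) ^ (-(1/20) : ℝ) :=
      Real.rpow_le_rpow_of_nonpos (by linarith) (by linarith) (by norm_num)
    have h2 : 0 ≤ ((a + b) / 2) ^ (-(1/20) : ℝ) := by positivity
    have e1 : 1 / a = a ^ (-(1/20) : ℝ) * a ^ (-(19/20) : ℝ) := by
      rw [← Real.rpow_add ha, one_div, ← Real.rpow_neg_one]; norm_num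
    have e2 : 1 / b = b ^ (-(19/20) : ℝ) * b ^ (-(1/20) : ℝ) := by
      rw [← Real.rpow_add hb, one_div, ← Real.rpow_neg_one]; norm_num
    have h3 : a ^ (-(19/20) : ℝ) ≤ b ^ (-(19/20) : ℝ) :=
      Real.rpow_le_rpow_of_nonpos hb h (by norm_num)
    calc 1 / a * b ^ (-(1/20) : ℝ) = a ^ (-(1/20) : ℝ) * (a ^ (-(19/20) : ℝ) * b ^ (-(1/20) : ℝ)) := by
          rw [e1]; ring
      _ ≤ ((a + b) / 2) ^ (-(1/20) : ℝ) * (b ^ (-(19/20) : ℝ) * b ^ (-(1/20) : ℝ)) := by gcongr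
      _ = ((a + b) / 2) ^ (-(1/20) : ℝ) * (1 / b) := by rw [e2]
      _ ≤ _ := by
        rw [mul_add]
        have : 0 ≤ ((a + b) / 2) ^ (-(1/20) : ℝ) * (1 / a) := by positivity
        linarith

lemma mz_conv (J : ℕ) : ∑ j ∈ range (J + 1), 1 / ((j:ℝ) + 1) * (((J - j : ℕ):ℝ) + 1) ^ (-(1/20) : ℝ)
    ≤ 164 * ((J:ℝ) + 2) ^ (-(1/40) : ℝ) := by
  set N : ℝ := (J:ℝ) + 2 with hN
  have hN0 : 0 < N := by positivity
  have h1 : ∀ j ∈ range (J + 1), 1 / ((j:ℝ) + 1) * (((J - j : ℕ):ℝ) + 1) ^ (-(1/20) : ℝ) ≤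
      (N / 2) ^ (-(1/20) : ℝ) * (1 / ((j:ℝ) + 1) + 1 / (((J - j : ℕ):ℝ) + 1)) := by
    intro j hj
    have hj : j ≤ J := by simpa [Nat.lt_succ_iff] using hj
    have := mz_pair (a := (j:ℝ) + 1) (b := ((J - j : ℕ):ℝ) + 1) (by positivity) (by positivity)
    have e : ((j:ℝ) + 1) + (((J - j : ℕ):ℝ) + 1) = N := by
      rw [Nat.cast_sub hj, hN]; ring
    rwa [e] at this
  refine (sum_le_sum h1).trans ?_
  rw [← mul_sum, sum_add_distrib]
  have h2 : ∑ j ∈ range (J+1), 1 / (((J - j : ℕ):ℝ) + 1) = ∑ j ∈ range (J+1), 1 / ((j:ℝ) + 1) := by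
    have := sum_range_reflect (fun j : ℕ => 1 / ((j:ℝ) + 1)) (J+1)
    rw [← this]; simp
  have h3 : ∑ j ∈ range (J+1), 1 / ((j:ℝ) + 1) ≤ 1 + Real.log N := by
    have := harmonic_le_one_add_log (J+1)
    have e : ((harmonic (J+1) : ℚ) : ℝ) = ∑ j ∈ range (J+1), 1 / ((j:ℝ) + 1) := by
      simp [harmonic]
    rw [e] at this
    refine this.trans ?_
    have : Real.log ((J+1 : ℕ):ℝ) ≤ Real.log N := by
      apply Real.log_le_log (by positivity); push_cast; rw [hN]; linarith
    linarith
  rw [h2]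
  have h4 : 1 + Real.log N ≤ 41 * N ^ (1/40 : ℝ) := by
    have a := Real.log_le_rpow_div hN0.le (show (0:ℝ) < 1/40 by norm_num)
    have b : 1 ≤ N ^ (1/40 : ℝ) := Real.one_le_rpow (by rw [hN]; have : (0:ℝ) ≤ J := by positivity
                                                        linarith) (by norm_num)
    linarith
  have h5 : (N / 2) ^ (-(1/20) : ℝ) ≤ 2 * N ^ (-(1/20) : ℝ) := by
    rw [Real.div_rpow hN0.le (by norm_num), div_le_iff₀ (by positivity)]
    have h5 : (2:ℝ)⁻¹ ≤ 2 ^ (-(1/20) : ℝ) := by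
      rw [← Real.rpow_neg_one]
      exact Real.rpow_le_rpow_of_exponent_le (by norm_num) (by norm_num)
    have : 0 < N ^ (-(1/20) : ℝ) := by positivity
    nlinarith
  calc _ ≤ (2 * N ^ (-(1/20) : ℝ)) * (41 * N ^ (1/40 : ℝ) + 41 * N ^ (1/40 : ℝ)) := by
        gcongr
        · exact h3.trans h4
        · exact h3.trans h4
    _ = 164 * (N ^ (-(1/20) : ℝ) * N ^ (1/40 : ℝ)) := by ring
    _ = _ := by rw [← Real.rpow_add hN0]; norm_num

/-- the majorant -/
noncomputable def mzH (y : ℝ) : ℝ :=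
  ∑ q ∈ (Icc 1 ⌊y⌋₊).filter (fun q => q = 1 ∨ q.Prime), 1 / (q:ℝ) * |mzm (y / q)|

lemma mzH_nonneg (y : ℝ) : 0 ≤ mzH y := sum_nonneg fun _ _ => by positivity

lemma mzH_zero {y : ℝ} (hy : y < 1) : mzH y = 0 := by
  simp [mzH, Nat.floor_eq_zero.2 hy]

lemma mzH_decay : ∃ C : ℝ, 0 < C ∧ ∀ y : ℝ, 1 ≤ y → mzH y ≤ C * (1 + Real.log y) ^ (-(1/40) : ℝ) := by
  obtain ⟨C, hC, h⟩ := mzm_decay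
  refine ⟨2 * C * 16 * 164, by positivity, fun y hy => ?_⟩
  have hy0 : 0 < y := by linarith
  set J := Nat.log 2 ⌊y⌋₊ with hJ
  have hfl : ⌊y⌋₊ ≠ 0 := by
    have := Nat.floor_pos.2 hy; omega
  have hJ1 : (2:ℝ) ^ J ≤ y := by
    have : 2 ^ J ≤ ⌊y⌋₊ := Nat.pow_log_le_self 2 hfl
    have h2 : ((2 ^ J : ℕ):ℝ) ≤ ⌊y⌋₊ := by exact_mod_cast this
    push_cast at h2
    exact h2.trans (Nat.floor_le hy0.le)
  have hJ2 : y < (2:ℝ) ^ (J+1) := by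
    have : ⌊y⌋₊ + 1 ≤ 2 ^ (J+1) := Nat.lt_pow_succ_log_self (by norm_num) _
    have h2 : ((⌊y⌋₊ + 1 : ℕ):ℝ) ≤ ((2 ^ (J+1) : ℕ):ℝ) := by exact_mod_cast this
    push_cast at h2
    exact (Nat.lt_floor_add_one y).trans_le h2
  have hl2 : (1:ℝ)/2 ≤ Real.log 2 := by linarith [Real.log_two_gt_d9]
  have hl2' : Real.log 2 ≤ 1 := by linarith [Real.log_two_lt_d9]
  have main : mzH y ≤ ∑ j ∈ range (J+1), 16 / ((j:ℝ)+1) * (2 * C * (((J - j : ℕ):ℝ) + 1) ^ (-(1/20) : ℝ)) := by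
    unfold mzH
    rw [← sum_fiberwise_of_maps_to (g := fun q => Nat.log 2 q) (t := range (J+1))]
    · refine sum_le_sum fun j hj => ?_
      have hj : j ≤ J := by simpa [Nat.lt_succ_iff] using hj
      have hbd : ∀ q ∈ {q ∈ (Icc 1 ⌊y⌋₊).filter (fun q => q = 1 ∨ q.Prime) | Nat.log 2 q = j},
          1 / (q:ℝ) * |mzm (y / q)| ≤ 1 / 2 ^ j * (2 * C * (((J - j : ℕ):ℝ) + 1) ^ (-(1/20) : ℝ)) := by
        intro q hq
        simp only [mem_filter, mem_Icc] at hq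
        obtain ⟨⟨⟨hq1, hqy⟩, -⟩, hlog⟩ := hq
        have a1 : 2 ^ j ≤ q := by rw [← hlog]; exact Nat.pow_log_le_self 2 (by omega)
        have a2 : q < 2 ^ (j+1) := by rw [← hlog]; exact Nat.lt_pow_succ_log_self (by norm_num) _
        have b1 : (2:ℝ) ^ j ≤ q := by exact_mod_cast a1
        have b2 : (q:ℝ) ≤ 2 ^ (j+1) := by exact_mod_cast a2.le
        have hq0 : (0:ℝ) < q := by exact_mod_cast hq1
        have b3 : (q:ℝ) ≤ y := (Nat.le_floor_iff hy0.le).1 hqy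
        have b4 : 1 ≤ y / q := (one_le_div hq0).2 b3
        have b5 : (((J - j : ℕ):ℝ) + 1) / 2 ≤ 1 + Real.log (y / q) := by
          have c1 := Real.log_nonneg b4
          rcases Nat.eq_zero_or_pos (J - j) with hk | hk
          · rw [hk]; norm_num; linarith
          · have c2 : (2:ℝ) ^ (J - j - 1) ≤ y / q := by
              rw [le_div_iff₀ hq0]
              calc (2:ℝ) ^ (J - j - 1) * q ≤ 2 ^ (J - j - 1) * 2 ^ (j+1) := by gcongr
                _ = 2 ^ J := by rw [← pow_add]; congr 1; omega
                _ ≤ y := hJ1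
            have c3 := Real.log_le_log (by positivity) c2
            rw [Real.log_pow, Nat.cast_sub (by omega : 1 ≤ J - j)] at c3
            have c4 : (1:ℝ) ≤ ((J - j : ℕ):ℝ) := by exact_mod_cast hk
            push_cast at c3 c4 ⊢
            nlinarith
        have b6 := h _ b4
        have b7 : (1 + Real.log (y / q)) ^ (-(1/20) : ℝ) ≤ 2 * (((J - j : ℕ):ℝ) + 1) ^ (-(1/20) : ℝ) := by
          refine (Real.rpow_le_rpow_of_nonpos (by positivity) b5 (by norm_num)).trans ?_
          rw [Real.div_rpow (by positivity) (by norm_num), div_le_iff₀ (by positivity)]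
          have h5 : (2:ℝ)⁻¹ ≤ 2 ^ (-(1/20) : ℝ) := by
            rw [← Real.rpow_neg_one]
            exact Real.rpow_le_rpow_of_exponent_le (by norm_num) (by norm_num)
          have : 0 < (((J - j : ℕ):ℝ) + 1) ^ (-(1/20) : ℝ) := by positivity
          nlinarith
        have b8 : |mzm (y / q)| ≤ 2 * C * (((J - j : ℕ):ℝ) + 1) ^ (-(1/20) : ℝ) := by
          refine b6.trans ?_
          nlinarith
        gcongr
      refine (sum_le_card_nsmul _ _ _ hbd).trans ?_
      rw [nsmul_eq_mul, ← mul_assoc]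
      have hcard : (({q ∈ (Icc 1 ⌊y⌋₊).filter (fun q => q = 1 ∨ q.Prime) | Nat.log 2 q = j}.card : ℕ) : ℝ)
          ≤ 16 * 2 ^ j / (j + 1) := by
        refine le_trans ?_ (mz_block_card j)
        norm_cast
        refine card_le_card fun q hq => ?_
        simp only [mem_filter, mem_Icc, mem_Ico] at hq ⊢
        obtain ⟨⟨⟨hq1, hqy⟩, hp⟩, hlog⟩ := hq
        exact ⟨⟨by rw [← hlog]; exact Nat.pow_log_le_self 2 (by omega),
          by rw [← hlog]; exact Nat.lt_pow_succ_log_self (by norm_num) _⟩, hp⟩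
      refine mul_le_mul_of_nonneg_right ?_ (by positivity)
      calc _ ≤ 16 * 2 ^ j / ((j:ℝ) + 1) * (1 / 2 ^ j) := by gcongr
        _ = _ := by field_simp
    · intro q hq
      simp only [mem_filter, mem_Icc] at hq
      simp only [coe_range, Set.mem_Iio, mem_range, Nat.lt_succ_iff, hJ]
      exact Nat.log_mono_right hq.1.2
  have e : ∑ j ∈ range (J+1), 16 / ((j:ℝ)+1) * (2 * C * (((J - j : ℕ):ℝ) + 1) ^ (-(1/20) : ℝ))
      = 2 * C * 16 * ∑ j ∈ range (J+1), 1 / ((j:ℝ)+1) * (((J - j : ℕ):ℝ) + 1) ^ (-(1/20) : ℝ) := by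
    rw [mul_sum]; refine sum_congr rfl fun j _ => ?_; ring
  rw [e] at main
  refine main.trans ?_
  rw [mul_assoc (2 * C * 16)]
  gcongr
  refine (mz_conv J).trans ?_
  have hlog : Real.log y ≤ J + 1 := by
    have := Real.log_le_log hy0 hJ2.le
    rw [Real.log_pow] at this
    push_cast at this
    have h0 : (0:ℝ) ≤ (J:ℝ) + 1 := by positivity
    nlinarith
  have := Real.log_nonneg hy
  gcongr 164 * ?_
  exact Real.rpow_le_rpow_of_nonpos (by linarith) (by linarith) (by norm_num)

lemma mzH_bdd : ∃ B : ℝ, 0 < B ∧ ∀ y : ℝ, mzH y ≤ B := by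
  obtain ⟨C, hC, h⟩ := mzH_decay
  refine ⟨C, hC, fun y => ?_⟩
  rcases lt_or_ge y 1 with hy | hy
  · rw [mzH_zero hy]; exact hC.le
  · refine (h y hy).trans ?_
    have := Real.rpow_le_one_of_one_le_of_nonpos (x := 1 + Real.log y) (z := -(1/40))
      (by linarith [Real.log_nonneg hy]) (by norm_num)
    nlinarith

lemma mzH_tendsto : Tendsto mzH atTop (nhds 0) := by
  obtain ⟨C, hC, h⟩ := mzH_decay
  have h1 : Tendsto (fun y : ℝ => C * (1 + Real.log y) ^ (-(1/40) : ℝ)) atTop (nhds (C * 0)) := by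
    refine Tendsto.const_mul C ?_
    exact (tendsto_rpow_neg_atTop (show (0:ℝ) < 1/40 by norm_num)).comp
      (tendsto_atTop_add_const_left _ _ Real.tendsto_log_atTop)
  rw [mul_zero] at h1
  refine tendsto_of_tendsto_of_tendsto_of_le_of_le' tendsto_const_nhds h1
    (Eventually.of_forall mzH_nonneg) ?_
  filter_upwards [eventually_ge_atTop 1] with y hy using h y hy

/-- the arithmetic function of the theorem -/
noncomputable def mzA (p : ℕ) : ArithmeticFunction ℤ :=
  ⟨fun n => if n.minFac = p then moebius n * (n.primeFactors.card : ℤ) else 0, by simp⟩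

lemma mzA_apply (p n : ℕ) :
    mzA p n = if n.minFac = p then moebius n * (n.primeFactors.card : ℤ) else 0 := rfl

noncomputable def mzG (p : ℕ) : ArithmeticFunction ℤ := (zeta : ArithmeticFunction ℤ) * mzA p

lemma mzA_eq (p : ℕ) : mzA p = mzG p * moebius := by
  rw [mzG, mul_comm, ← mul_assoc, moebius_mul_coe_zeta, one_mul]

/-- weight by `1/n` -/
noncomputable def mzW (f : ArithmeticFunction ℤ) : ArithmeticFunction ℝ :=
  ⟨fun n => (f n : ℝ) / n, by simp⟩

lemma mzW_apply (f : ArithmeticFunction ℤ) (n : ℕ) : mzW f n = (f n : ℝ) / n := rfl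

lemma mzW_mul (f g : ArithmeticFunction ℤ) : mzW (f * g) = mzW f * mzW g := by
  ext n
  rw [mzW_apply, ArithmeticFunction.mul_apply, ArithmeticFunction.mul_apply]
  push_cast
  rw [sum_div]
  refine sum_congr rfl fun x hx => ?_
  have := (Nat.mem_divisorsAntidiagonal.1 hx).1
  rw [mzW_apply, mzW_apply, ← this]
  push_cast
  rw [div_mul_div_comm]

lemma mz_sum_eq (p : ℕ) (hp : p.Prime) (x : ℝ) :
    ∑ n ∈ (Finset.Icc 2 ⌊x⌋₊).filter (fun n => n.minFac = p),
          (moebius n : ℝ) * (n.primeFactors.card : ℝ) / n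
      = ∑ b ∈ Icc 1 ⌊x⌋₊, (mzG p b : ℝ) / b * mzm (x / b) := by
  have h1 : ∑ n ∈ Ioc 0 ⌊x⌋₊, mzW (mzA p) n = ∑ b ∈ Icc 1 ⌊x⌋₊, (mzG p b : ℝ) / b * mzm (x / b) := by
    rw [mzA_eq, mzW_mul, sum_Ioc_mul_eq_sum_sum]
    refine sum_congr (by ext; simp; omega) fun b _ => ?_
    rw [mzW_apply, mzm, Nat.floor_div_natCast]
    congr 1
  rw [← h1, sum_filter]
  have e : Ioc 0 ⌊x⌋₊ = Icc 1 ⌊x⌋₊ := by ext; simp; omega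
  rw [e]
  refine sum_subset_zero_on_sdiff (Icc_subset_Icc_left (by norm_num)) ?_ ?_
  · intro n hn
    have : n = 1 := by simp at hn; omega
    subst this
    simp [mzW_apply, mzA_apply]
  · intro n hn
    rw [mzW_apply, mzA_apply]
    split_ifs <;> simp

lemma mz_alt (Q : Finset ℕ) :
    |∑ U ∈ Q.powerset, (-1:ℤ) ^ #U * (1 + #U)| ≤ 1 ∧
    (1 < #Q → ∑ U ∈ Q.powerset, (-1:ℤ) ^ #U * (1 + #U) = 0) := by
  induction Q using Finset.induction_on with
  | empty => simp
  | insert q Q hq _ =>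
    have e : ∑ U ∈ (insert q Q).powerset, (-1:ℤ) ^ #U * (1 + #U) = - ∑ U ∈ Q.powerset, (-1:ℤ) ^ #U := by
      rw [sum_powerset_insert hq, ← sum_add_distrib, ← sum_neg_distrib]
      refine sum_congr rfl fun U hU => ?_
      have : q ∉ U := fun h => hq (mem_powerset.1 hU h)
      rw [card_insert_of_notMem this]; push_cast; ring
    rw [e, sum_powerset_neg_one_pow_card]
    refine ⟨by split_ifs <;> simp, fun h => ?_⟩
    rw [card_insert_of_notMem hq] at h
    have : Q ≠ ∅ := by rintro rfl; simp at h
    simp [this]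

lemma mz_moebius_sqf {n : ℕ} (h : Squarefree n) : moebius n = (-1) ^ #n.primeFactors := by
  rw [moebius_apply_of_squarefree h, ← (cardDistinctFactors_eq_cardFactors_iff_squarefree h.ne_zero).2 h]
  rfl

lemma mzG_eq (p : ℕ) (hp : p.Prime) {n : ℕ} (hn : n ≠ 0) (hpn : p ∣ n) :
    mzG p n = - ∑ U ∈ (n.primeFactors.filter (fun q => p < q)).powerset, (-1:ℤ) ^ #U * (1 + #U) := by
  rw [mzG, coe_zeta_mul_apply]
  have e1 : ∑ d ∈ n.divisors, mzA p d =
      ∑ d ∈ n.divisors.filter (fun d => Squarefree d ∧ d.minFac = p), (-1:ℤ) ^ #d.primeFactors * #d.primeFactors := by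
    rw [sum_filter]
    refine sum_congr rfl fun d _ => ?_
    rw [mzA_apply]
    by_cases h1 : Squarefree d
    · by_cases h2 : d.minFac = p
      · simp [h1, h2, mz_moebius_sqf h1]
      · simp [h1, h2]
    · simp [h1]
  rw [e1, ← sum_neg_distrib]
  have hS : ∀ U ∈ (n.primeFactors.filter (fun q => p < q)).powerset,
      p ∉ U ∧ (∀ q ∈ insert p U, q.Prime) ∧ insert p U ⊆ n.primeFactors ∧ ∀ q ∈ insert p U, p ≤ q := by
    intro U hU
    have hU := mem_powerset.1 hU
    have h1 : insert p U ⊆ n.primeFactors := by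
      intro q hq
      rcases mem_insert.1 hq with rfl | hq
      · exact Nat.mem_primeFactors.2 ⟨hp, hpn, hn⟩
      · exact (mem_filter.1 (hU hq)).1
    refine ⟨fun h => lt_irrefl _ (mem_filter.1 (hU h)).2, fun q hq => Nat.prime_of_mem_primeFactors (h1 hq), h1, ?_⟩
    intro q hq
    rcases mem_insert.1 hq with rfl | hq
    · exact le_rfl
    · exact (mem_filter.1 (hU hq)).2.le
  refine sum_nbij' (fun d => d.primeFactors.erase p) (fun U => ∏ q ∈ insert p U, q) ?_ ?_ ?_ ?_ ?_
  · intro d hd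
    simp only [mem_filter, Nat.mem_divisors] at hd
    obtain ⟨⟨hdn, -⟩, hsq, hmin⟩ := hd
    refine mem_powerset.2 fun q hq => ?_
    have hq := mem_erase.1 hq
    have hq2 := Nat.mem_primeFactors.1 hq.2
    refine mem_filter.2 ⟨Nat.mem_primeFactors.2 ⟨hq2.1, hq2.2.1.trans hdn, hn⟩, ?_⟩
    have := Nat.minFac_le_of_dvd hq2.1.two_le hq2.2.1
    have := hq.1
    omega
  · intro U hU
    obtain ⟨h1, h2, h3, h4⟩ := hS U hU
    have hpf : (∏ q ∈ insert p U, q).primeFactors = insert p U := Nat.primeFactors_prod h2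
    simp only [mem_filter, Nat.mem_divisors]
    refine ⟨⟨(prod_dvd_prod_of_subset _ _ _ h3).trans (Nat.prod_primeFactors_dvd n), hn⟩, ?_, ?_⟩
    · refine Finset.squarefree_prod_of_pairwise_isCoprime (fun a ha b hb hab => ?_)
        (fun a ha => (h2 a ha).squarefree)
      simp only [Function.onFun, Nat.isCoprime_iff_coprime, id]
      exact Nat.coprime_iff_isRelPrime.1 ((Nat.coprime_primes (h2 a ha) (h2 b hb)).2 hab)
    · have hne : (∏ q ∈ insert p U, q) ≠ 1 := by
        intro h; rw [h, Nat.primeFactors_one] at hpf; exact (insert_ne_empty p U) hpf.symm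
      have hp1 : p ∈ (∏ q ∈ insert p U, q).primeFactors := by rw [hpf]; simp
      apply le_antisymm
      · exact Nat.minFac_le_of_dvd hp.two_le (Nat.dvd_of_mem_primeFactors hp1)
      · apply h4
        suffices hh : (∏ q ∈ insert p U, q).minFac ∈ (∏ q ∈ insert p U, q).primeFactors by
          rwa [hpf] at hh
        exact Nat.mem_primeFactors.2 ⟨Nat.minFac_prime hne, Nat.minFac_dvd _, (Nat.mem_primeFactors.1 hp1).2.2⟩
  · intro d hd
    simp only [mem_filter, Nat.mem_divisors] at hd
    obtain ⟨⟨hdn, -⟩, hsq, hmin⟩ := hd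
    have : p ∈ d.primeFactors := by
      refine Nat.mem_primeFactors.2 ⟨hp, ?_, hsq.ne_zero⟩
      rw [← hmin]; exact Nat.minFac_dvd d
    simp only [insert_erase this]
    exact Nat.prod_primeFactors_of_squarefree hsq
  · intro U hU
    obtain ⟨h1, h2, h3, h4⟩ := hS U hU
    have hpf : (∏ q ∈ insert p U, q).primeFactors = insert p U := Nat.primeFactors_prod h2
    simp only [hpf, erase_insert h1]
  · intro d hd
    simp only [mem_filter, Nat.mem_divisors] at hd
    obtain ⟨⟨hdn, -⟩, hsq, hmin⟩ := hd
    have : p ∈ d.primeFactors := by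
      refine Nat.mem_primeFactors.2 ⟨hp, ?_, hsq.ne_zero⟩
      rw [← hmin]; exact Nat.minFac_dvd d
    have hc := card_erase_add_one this
    rw [← hc]; push_cast; ring

/-- at most one prime factor above `p` -/
def mzGood (p n : ℕ) : Prop := #(n.primeFactors.filter (fun q => p < q)) ≤ 1

lemma mzG_bound (p : ℕ) (hp : p.Prime) {n : ℕ} (hn : n ≠ 0) :
    |(mzG p n : ℝ)| ≤ 1 ∧ (¬ mzGood p n → mzG p n = 0) := by
  by_cases hpn : p ∣ n
  · rw [mzG_eq p hp hn hpn]
    have h := mz_alt (n.primeFactors.filter (fun q => p < q))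
    refine ⟨?_, fun h2 => ?_⟩
    · have := h.1
      rw [Int.cast_neg, abs_neg]
      exact_mod_cast this
    · rw [h.2 (by simpa [mzGood] using h2), neg_zero]
  · have : mzG p n = 0 := by
      rw [mzG, coe_zeta_mul_apply]
      refine sum_eq_zero fun d hd => ?_
      rw [mzA_apply]
      rw [if_neg]
      intro h
      exact hpn (h ▸ (Nat.minFac_dvd d).trans (Nat.dvd_of_mem_divisors hd))
    simp [this]

lemma mz_sqf_le {p d : ℕ} (hd : Squarefree d) (h : ∀ q ∈ d.primeFactors, q ≤ p) : d ≤ primorial p := by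
  apply Nat.le_of_dvd (primorial_pos p)
  rw [← Nat.prod_primeFactors_of_squarefree hd, primorial]
  refine prod_dvd_prod_of_subset _ _ _ fun q hq => ?_
  simp [h q hq, Nat.prime_of_mem_primeFactors hq]

lemma mz_good_decomp {p n : ℕ} (hn : n ≠ 0) (h : mzGood p n) :
    ∃ d s q : ℕ, d ∈ Icc 1 (primorial p) ∧ s ∈ Icc 1 n ∧ q ∈ (Icc 1 n).filter (fun q => q = 1 ∨ q.Prime)
      ∧ d * s ^ 2 * q = n := by
  obtain ⟨m, s, hms, hm⟩ := Nat.sq_mul_squarefree n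
  have hm0 := hm.ne_zero
  have hs0 : s ≠ 0 := by rintro rfl; simp at hms; omega
  have hsn : s ≤ n := by
    rw [← hms]; nlinarith [Nat.pos_of_ne_zero hm0, Nat.pos_of_ne_zero hs0, Nat.one_le_iff_ne_zero.2 hs0, Nat.mul_le_mul (Nat.one_le_iff_ne_zero.2 hm0) (Nat.one_le_iff_ne_zero.2 hs0)]
  have hmn : m ∣ n := ⟨s^2, by rw [← hms]; ring⟩
  by_cases hq : ∃ q ∈ m.primeFactors, p < q
  · obtain ⟨q, hq, hpq⟩ := hq
    obtain ⟨d, hd⟩ := Nat.dvd_of_mem_primeFactors hq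
    have hqp := Nat.prime_of_mem_primeFactors hq
    have hdm : d ∣ m := ⟨q, by rw [hd]; ring⟩
    have hdsq : Squarefree d := hm.squarefree_of_dvd hdm
    have hqn : q ∣ n := (Nat.dvd_of_mem_primeFactors hq).trans hmn
    refine ⟨d, s, q, mem_Icc.2 ⟨Nat.pos_of_ne_zero hdsq.ne_zero, mz_sqf_le hdsq ?_⟩,
      mem_Icc.2 ⟨Nat.pos_of_ne_zero hs0, hsn⟩,
      mem_filter.2 ⟨mem_Icc.2 ⟨hqp.one_lt.le, Nat.le_of_dvd (Nat.pos_of_ne_zero hn) hqn⟩, Or.inr hqp⟩, ?_⟩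
    · intro r hr
      by_contra hrp
      have hrp := not_le.1 hrp
      have hr' := Nat.mem_primeFactors.1 hr
      have hrq : r = q := card_le_one.1 h r (mem_filter.2 ⟨Nat.mem_primeFactors.2
        ⟨hr'.1, (hr'.2.1.trans hdm).trans hmn, hn⟩, hrp⟩) q
        (mem_filter.2 ⟨Nat.mem_primeFactors.2 ⟨hqp, hqn, hn⟩, hpq⟩)
      subst hrq
      have : r * r ∣ m := by rw [hd]; exact Nat.mul_dvd_mul_left _ hr'.2.1
      exact hqp.one_lt.ne' (Nat.isUnit_iff.1 (hm r this))
    · rw [← hms, hd]; ring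
  · push Not at hq
    refine ⟨m, s, 1, mem_Icc.2 ⟨Nat.pos_of_ne_zero hm0, mz_sqf_le hm hq⟩,
      mem_Icc.2 ⟨Nat.pos_of_ne_zero hs0, hsn⟩,
      mem_filter.2 ⟨mem_Icc.2 ⟨le_rfl, Nat.pos_of_ne_zero hn⟩, Or.inl rfl⟩, ?_⟩
    rw [← hms]; ring

lemma mzH_eq {y : ℝ} {N : ℕ} (h : y < N + 1) :
    ∑ q ∈ (Icc 1 N).filter (fun q => q = 1 ∨ q.Prime), 1 / (q:ℝ) * |mzm (y / q)| = mzH y := by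
  symm
  have hf : ⌊y⌋₊ ≤ N := by
    rcases lt_or_ge y 0 with h0 | h0
    · rw [Nat.floor_of_nonpos h0.le]; omega
    · have : ⌊y⌋₊ < N + 1 := (Nat.floor_lt h0).2 (by exact_mod_cast h)
      omega
  refine sum_subset (filter_subset_filter _ (Icc_subset_Icc_right hf)) ?_
  intro q hq hq2
  simp only [mem_filter, mem_Icc, not_and] at hq hq2
  have h1 : ⌊y⌋₊ < q := by
    by_contra hh
    exact hq2 ⟨hq.1.1, not_lt.1 hh⟩ hq.2
  have hq0 : (0:ℝ) < q := by exact_mod_cast hq.1.1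
  have h2 : y < q := Nat.lt_of_floor_lt h1
  rw [mzm_zero ((div_lt_one hq0).2 h2)]
  simp

lemma mz_main_bound (p : ℕ) (hp : p.Prime) {x : ℝ} (hx : 0 ≤ x) :
    |∑ b ∈ Icc 1 ⌊x⌋₊, (mzG p b : ℝ) / b * mzm (x / b)| ≤
      ∑ d ∈ Icc 1 (primorial p), ∑ s ∈ Icc 1 ⌊x⌋₊,
        1 / ((d:ℝ) * (s:ℝ) ^ 2) * mzH (x / ((d:ℝ) * (s:ℝ) ^ 2)) := by
  classical
  set N := ⌊x⌋₊ with hN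
  set F : ℕ → ℝ := fun b => 1 / (b:ℝ) * |mzm (x / b)| with hF
  have hF0 : ∀ b, 0 ≤ F b := fun b => by simp only [hF]; positivity
  set T := Icc 1 (primorial p) ×ˢ (Icc 1 N ×ˢ (Icc 1 N).filter (fun q => q = 1 ∨ q.Prime)) with hT
  set f : ℕ × ℕ × ℕ → ℕ := fun t => t.1 * t.2.1 ^ 2 * t.2.2 with hf
  have h1 : |∑ b ∈ Icc 1 N, (mzG p b : ℝ) / b * mzm (x / b)| ≤ ∑ b ∈ (Icc 1 N).filter (mzGood p), F b := by
    refine (abs_sum_le_sum_abs _ _).trans ?_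
    rw [sum_filter]
    refine sum_le_sum fun b hb => ?_
    have hb0 : b ≠ 0 := by have := (mem_Icc.1 hb).1; omega
    obtain ⟨h1, h2⟩ := mzG_bound p hp hb0
    split_ifs with hg
    · rw [abs_mul, abs_div, Nat.abs_cast]
      simp only [hF]
      gcongr
    · simp [h2 hg]
  have h2 : (Icc 1 N).filter (mzGood p) ⊆ T.image f := by
    intro b hb
    obtain ⟨hb1, hb2⟩ := mem_filter.1 hb
    have hb1 := mem_Icc.1 hb1
    obtain ⟨d, s, q, hd, hs, hq, e⟩ := mz_good_decomp (by omega) hb2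
    refine mem_image.2 ⟨(d, s, q), ?_, e⟩
    simp only [hT, mem_product, mem_filter, mem_Icc] at hd hs hq ⊢
    exact ⟨hd, ⟨hs.1, by omega⟩, ⟨hq.1.1, by omega⟩, hq.2⟩
  refine h1.trans ((sum_le_sum_of_subset_of_nonneg h2 fun b _ _ => hF0 b).trans
    ((sum_image_le_of_nonneg fun b _ => hF0 b).trans ?_))
  rw [hT, sum_product]
  refine sum_le_sum fun d hd => ?_
  rw [sum_product]
  refine sum_le_sum fun s hs => ?_
  have hd0 : (1:ℝ) ≤ d := by exact_mod_cast (mem_Icc.1 hd).1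
  have hs0 : (1:ℝ) ≤ s := by exact_mod_cast (mem_Icc.1 hs).1
  have hds : (1:ℝ) ≤ d * s ^ 2 := by nlinarith [one_le_pow₀ hs0 (n := 2)]
  have hlt : x / ((d:ℝ) * s ^ 2) < N + 1 := by
    refine (div_le_self hx hds).trans_lt (Nat.lt_floor_add_one x)
  rw [← mzH_eq hlt, mul_sum]
  refine le_of_eq (sum_congr rfl fun q _ => ?_)
  simp only [hF, hf]
  push_cast
  rw [div_div, ← mul_assoc]
  congr 1
  rw [div_mul_div_comm, one_mul]

lemma mz_tannery {d : ℕ} (hd : 1 ≤ d) :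
    Tendsto (fun x : ℝ => ∑' s : ℕ, 1 / ((d:ℝ) * (s:ℝ) ^ 2) * mzH (x / ((d:ℝ) * (s:ℝ) ^ 2)))
      atTop (nhds 0) := by
  obtain ⟨B, hB, h⟩ := mzH_bdd
  have hd0 : (1:ℝ) ≤ d := by exact_mod_cast hd
  have key := tendsto_tsum_of_dominated_convergence (𝓕 := (atTop : Filter ℝ))
    (f := fun (x : ℝ) (s : ℕ) => 1 / ((d:ℝ) * (s:ℝ) ^ 2) * mzH (x / ((d:ℝ) * (s:ℝ) ^ 2)))
    (g := fun _ : ℕ => (0:ℝ)) (bound := fun s : ℕ => 1 / (s:ℝ) ^ 2 * B)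
    ((Real.summable_one_div_nat_pow.2 (by norm_num : 1 < 2)).mul_right B) ?_ ?_
  · simpa using key
  · intro s
    rcases Nat.eq_zero_or_pos s with rfl | hs
    · simp
    · have hs0 : (0:ℝ) < s := by exact_mod_cast hs
      have := (mzH_tendsto.comp (tendsto_id.atTop_div_const (show 0 < (d:ℝ) * (s:ℝ)^2 by positivity))).const_mul
        (1 / ((d:ℝ) * (s:ℝ) ^ 2))
      rw [mul_zero] at this
      exact this
  · filter_upwards with x s
    have h0 := mzH_nonneg (x / ((d:ℝ) * (s:ℝ) ^ 2))
    rw [Real.norm_of_nonneg (by positivity)]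
    rcases Nat.eq_zero_or_pos s with rfl | hs
    · simp
    · have hs0 : (0:ℝ) < s := by exact_mod_cast hs
      have h1 : 1 / ((d:ℝ) * (s:ℝ) ^ 2) ≤ 1 / (s:ℝ) ^ 2 := by
        apply one_div_le_one_div_of_le (by positivity)
        nlinarith [sq_nonneg (s:ℝ)]
      exact mul_le_mul h1 (h _) h0 (by positivity)

theorem mz_final (p : ℕ) (hp : p.Prime) :
    Tendsto (fun x : ℝ =>
        ∑ n ∈ (Finset.Icc 2 ⌊x⌋₊).filter (fun n => n.minFac = p),
          (moebius n : ℝ) * (n.primeFactors.card : ℝ) / n)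
      atTop (nhds 0) := by
  obtain ⟨B, hB, h⟩ := mzH_bdd
  have hT : Tendsto (fun x : ℝ => ∑ d ∈ Icc 1 (primorial p),
      ∑' s : ℕ, 1 / ((d:ℝ) * (s:ℝ) ^ 2) * mzH (x / ((d:ℝ) * (s:ℝ) ^ 2))) atTop (nhds 0) := by
    have := tendsto_finsetSum (Icc 1 (primorial p)) fun d hd => mz_tannery (mem_Icc.1 hd).1
    simpa using this
  refine squeeze_zero_norm' ?_ hT
  filter_upwards [eventually_ge_atTop 0] with x hx
  rw [mz_sum_eq p hp, Real.norm_eq_abs]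
  refine (mz_main_bound p hp hx).trans (sum_le_sum fun d hd => ?_)
  have hd0 : (1:ℝ) ≤ d := by exact_mod_cast (mem_Icc.1 hd).1
  have hnn : ∀ s : ℕ, 0 ≤ 1 / ((d:ℝ) * (s:ℝ) ^ 2) * mzH (x / ((d:ℝ) * (s:ℝ) ^ 2)) := fun s =>
    mul_nonneg (by positivity) (mzH_nonneg _)
  refine Summable.sum_le_tsum _ (fun s _ => hnn s) ?_
  refine Summable.of_nonneg_of_le hnn (fun s => ?_)
    ((Real.summable_one_div_nat_pow.2 (by norm_num : 1 < 2)).mul_right B)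
  rcases Nat.eq_zero_or_pos s with rfl | hs
  · simp
  · have hs0 : (0:ℝ) < s := by exact_mod_cast hs
    have h1 : 1 / ((d:ℝ) * (s:ℝ) ^ 2) ≤ 1 / (s:ℝ) ^ 2 := by
      apply one_div_le_one_div_of_le (by positivity)
      nlinarith [sq_nonneg (s:ℝ)]
    exact mul_le_mul h1 (h _) (mzH_nonneg _) (by positivity)

/-- For an arbitrary but fixed prime `p`, the series `Σ_{n ≥ 2, p(n) = p} μ(n) ω(n)/n`,
taken over integers `n ≥ 2` whose smallest prime factor equals `p`, converges to `0`:
its partial sums up to `x` tend to `0` as `x → ∞`. -/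
theorem moebius_omega_div_fixed_smallest_factor (p : ℕ) (hp : p.Prime) :
    Tendsto (fun x : ℝ =>
        ∑ n ∈ (Finset.Icc 2 ⌊x⌋₊).filter (fun n => n.minFac = p),
          (moebius n : ℝ) * (n.primeFactors.card : ℝ) / n)
      atTop (nhds 0) := by
  exact mz_final p hp
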